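/- arXiv:1607.00921 — 4 statements merged into one kernel-verified Lean document; each statement's English description precedes it below -/
import Mathlib

section
/- Let Z be the polynomial ring k[X,Y] over a field k, m = (X,Y), and let R be the tiled order consisting of 2×2 matrices (a b; c d) with a,c,d ∈ Z and b ∈ m. Then R is a prime noetherian ring with center isomorphic to Z, R has finite global dimension, R_p is isomorphic to M_2(Z_p) for every height-one prime p of Z, yet the Azumaya locus of R is Maxspec(Z) \ {m}, which is a proper subset of the smooth locus Maxspec(Z). -/
universe u

/-- A two-sided ideal of a (possibly noncommutative) ring is prime. -/
def IsPrimeTS {R : Type*} [Ring R] (P : TwoSidedIdeal R) : Prop :=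
  P ≠ ⊤ ∧ ∀ a b : R, (∀ r : R, a * r * b ∈ P) → a ∈ P ∨ b ∈ P

/-- Height of an element `P` in a poset with respect to a predicate (`prime`):
the supremum of lengths of strictly increasing chains of elements satisfying the
predicate and ending at `P`. -/
noncomputable def primeChainHeight {α : Type*} [Preorder α] (isP : α → Prop) (P : α) : ℕ∞ :=
  sSup {n : ℕ∞ | ∃ m : ℕ, n = (m : ℕ∞) ∧ ∃ f : Fin (m + 1) → α,
    StrictMono f ∧ (∀ i, isP (f i)) ∧ f (Fin.last m) = P}

/-- Height (codimension) of a two-sided ideal: the supremum of lengths of chains of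
prime two-sided ideals descending from it. -/
noncomputable def tsHeight {R : Type*} [Ring R] (P : TwoSidedIdeal R) : ℕ∞ :=
  primeChainHeight IsPrimeTS P

/-- Height of an ideal of a commutative ring. -/
noncomputable def cHeight {C : Type*} [CommRing C] (p : Ideal C) : ℕ∞ :=
  primeChainHeight Ideal.IsPrime p

/-- Contraction `P ∩ C` of a two-sided ideal of `R` to the central subring `C`
(given via the algebra structure map, whose image is central). -/
def contractTS {C R : Type*} [CommRing C] [Ring R] [Algebra C R]
    (P : TwoSidedIdeal R) : Ideal C :=
  Ideal.comap (algebraMap C R) (TwoSidedIdeal.asIdeal P)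

open CategoryTheory in
/-- The `i`-th Ext group `Ext^i_S(M, N)` of (left) modules over an arbitrary ring. -/
noncomputable def ExtGroup (S : Type u) [Ring S] (M N : Type u) [AddCommGroup M] [Module S M]
    [AddCommGroup N] [Module S N] (i : ℕ) : Type _ :=
  letI : HasDerivedCategory (ModuleCat S) := HasDerivedCategory.standard _
  letI : HasExt (ModuleCat S) := hasExt_of_hasDerivedCategory _
  Abelian.Ext (ModuleCat.of S M) (ModuleCat.of S N) i

/-- The homological grade `j_S(M) = min { i | Ext^i_S(M, S) ≠ 0 }` (valued `∞` if
no such `i` exists). -/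
noncomputable def homGrade (S : Type u) [Ring S] (M : Type u) [AddCommGroup M]
    [Module S M] : ℕ∞ :=
  sInf {n : ℕ∞ | ∃ i : ℕ, n = i ∧ ¬ Subsingleton (ExtGroup S M S i)}

/-- The left ideal of `Rᵐᵒᵖ` corresponding to a two-sided ideal of `R`; the quotient
`Rᵐᵒᵖ ⧸ tsOpIdeal P` realises `R/P` as a right `R`-module. -/
def tsOpIdeal {R : Type*} [Ring R] (P : TwoSidedIdeal R) : Ideal Rᵐᵒᵖ where
  carrier := {x | x.unop ∈ P}
  add_mem' ha hb := by simpa using P.add_mem ha hb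
  zero_mem' := by simpa using P.zero_mem
  smul_mem' r x hx := by
    show (r * x).unop ∈ P
    rw [MulOpposite.unop_mul]
    exact P.mul_mem_right _ _ hx

/-- A ring has finite (left) global dimension: there is an `n` such that all Ext groups
vanish in degrees above `n`. -/
def HasFiniteGlobalDimension (S : Type u) [Ring S] : Prop :=
  ∃ n : ℕ, ∀ (M N : Type u) [AddCommGroup M] [Module S M] [AddCommGroup N] [Module S N],
    ∀ i : ℕ, n < i → Subsingleton (ExtGroup S M N i)

open TensorProduct in
/-- The canonical map `R ⊗_C Rᵒᵖ → End_C(R)`, `a ⊗ b ↦ (x ↦ a * x * b)`. -/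
noncomputable def azuMap (C R : Type*) [CommRing C] [Ring R] [Algebra C R] :
    R ⊗[C] Rᵐᵒᵖ →ₗ[C] (R →ₗ[C] R) :=
  TensorProduct.lift <| LinearMap.mk₂ C
    (fun a b => (LinearMap.mulLeft C a).comp (LinearMap.mulRight C b.unop))
    (by intro a a' b; ext x; simp [add_mul])
    (by intro c a b; ext x; simp [smul_mul_assoc])
    (by intro a b b'; ext x; simp [mul_add])
    (by intro c a b; ext x; simp [mul_smul_comm])

/-- `R` is an Azumaya algebra over the commutative ring `C`: it is a faithful
finitely generated projective `C`-module and the enveloping map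
`R ⊗_C Rᵒᵖ → End_C(R)` is bijective. -/
def IsAzumayaAlg (C R : Type*) [CommRing C] [Ring R] [Algebra C R] : Prop :=
  Module.Finite C R ∧ Module.Projective C R ∧ FaithfulSMul C R ∧
    Function.Bijective (azuMap C R)

variable (k : Type u) [Field k]

/-- The maximal ideal `m = ⟨X, Y⟩` of `Z = k[X,Y]`. -/
noncomputable def mXY : Ideal (MvPolynomial (Fin 2) k) :=
  Ideal.span {MvPolynomial.X 0, MvPolynomial.X 1}

theorem tiled_mul_mem {a b : Matrix (Fin 2) (Fin 2) (MvPolynomial (Fin 2) k)}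
    (ha : a 0 1 ∈ mXY k) (hb : b 0 1 ∈ mXY k) : (a * b) 0 1 ∈ mXY k := by
  simp only [Matrix.mul_apply, Fin.sum_univ_two]
  exact Ideal.add_mem _ (Ideal.mul_mem_left _ _ hb) (Ideal.mul_mem_right _ _ ha)

theorem tiled_alg_mem (c : MvPolynomial (Fin 2) k) :
    algebraMap (MvPolynomial (Fin 2) k)
      (Matrix (Fin 2) (Fin 2) (MvPolynomial (Fin 2) k)) c 0 1 ∈ mXY k := by
  simp only [Matrix.algebraMap_matrix_apply]
  rw [if_neg (by decide)]
  exact Ideal.zero_mem _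

/-- The tiled order `R = (Z m; Z Z) ⊆ M₂(Z)`, `Z = k[X,Y]`: the matrices whose
`(1,2)`-entry lies in `m = ⟨X, Y⟩`. -/
noncomputable def TiledR : Subalgebra (MvPolynomial (Fin 2) k)
    (Matrix (Fin 2) (Fin 2) (MvPolynomial (Fin 2) k)) where
  carrier := {A | A 0 1 ∈ mXY k}
  mul_mem' := tiled_mul_mem k
  add_mem' := fun ha hb => Ideal.add_mem (mXY k) ha hb
  algebraMap_mem' := tiled_alg_mem k

/-!
Let `e = (1 0; 0 0)`. For a left `R`-module `M`, the comparison map from the `M₂(Z)`-module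
`(eM)²` back to `M` has kernel and cokernel killed by `e`, and a module killed by `e` is a
`Z/m`-module on which `R` acts through its lower right entry. Since `M₂(Z)` is projective as an
`R`-module, `(eM)²` has projective dimension over `R` at most that of `eM` over `Z`, which Hilbert's
syzygy theorem bounds. For `M = R` the comparison map is injective with cokernel `Z/m`, so `Z/m`,
and with it every `Z/m`-module, also has finite projective dimension over `R`.

If `p` does not contain `m`, then some element `s` of `m` is invertible in `Z_p`, and
`s M₂(Z) ⊆ R` gives `R_p = M₂(Z_p)`; a height-one prime `p` does not contain `m` because of the
chain `0 < (X) < m`. At `m` the order is not Azumaya: a linear endomorphism of an Azumaya algebra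
preserves two-sided ideals, but `x ↦ x₂₂ · 1` sends the matrix `(0 0; 0 1)`, which lies in the
kernel of the upper left character `R → Z/m`, to `1`.
-/

section ProjectiveDimension

open CategoryTheory Limits

theorem hasProjectiveDimensionLE_obj_of_shortExact_map {C D : Type*} [Category C] [Category D]
    [Abelian C] [Abelian D] [EnoughProjectives C] (F : C ⥤ D) [F.PreservesZeroMorphisms]
    (shortExact_map : ∀ T : ShortComplex C, T.ShortExact → (T.map F).ShortExact) {d : ℕ}
    (projective_obj : ∀ P : C, Projective P → HasProjectiveDimensionLE (F.obj P) d) (n : ℕ)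
    (X : C) [HasProjectiveDimensionLE X n] : HasProjectiveDimensionLE (F.obj X) (n + d) := by
  induction n generalizing X with
  | zero =>
    rw [zero_add]
    exact projective_obj X ((projective_iff_hasProjectiveDimensionLE_zero X).mpr ‹_›)
  | succ n ih =>
    obtain ⟨⟨P, f⟩⟩ := EnoughProjectives.presentation X
    have exact_kernel : (ShortComplex.mk (kernel.ι f) f (kernel.condition f)).ShortExact :=
      { exact := ShortComplex.exact_kernel f }
    have : HasProjectiveDimensionLE (kernel f) n :=
      (exact_kernel.hasProjectiveDimensionLT_X₃_iff n ‹_›).mp ‹_›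
    have : HasProjectiveDimensionLE (F.obj P) d := projective_obj P ‹_›
    have middle : HasProjectiveDimensionLT (F.obj P) (n + 1 + d + 1) :=
      hasProjectiveDimensionLT_of_ge _ (d + 1) _ (by lia)
    have left : HasProjectiveDimensionLT (F.obj (kernel f)) (n + 1 + d) :=
      hasProjectiveDimensionLT_of_ge _ (n + d + 1) _ (by lia)
    exact (shortExact_map _ exact_kernel).hasProjectiveDimensionLT_X₃ _ left middle

variable {R S : Type u} [Ring R] [Ring S]

theorem shortExact_of_function_exact {L M N : Type u} [AddCommGroup L] [AddCommGroup M]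
    [AddCommGroup N] [Module R L] [Module R M] [Module R N] {f : L →ₗ[R] M} {g : M →ₗ[R] N}
    (inj : Function.Injective f) (hfg : Function.Exact f g) (surj : Function.Surjective g) :
    (ModuleCat.shortComplexOfCompEqZero f g hfg.linearMap_comp_eq_zero).ShortExact :=
  ModuleCat.shortComplex_shortExact _ hfg inj surj

theorem hasProjectiveDimensionLE_of_ker_of_coker {M N : Type u} [AddCommGroup M] [AddCommGroup N]
    [Module R M] [Module R N] (f : M →ₗ[R] N) {n : ℕ}
    (hker : HasProjectiveDimensionLE (ModuleCat.of R f.ker) n)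
    (hM : HasProjectiveDimensionLE (ModuleCat.of R M) (n + 1))
    (hcoker : HasProjectiveDimensionLE (ModuleCat.of R (N ⧸ f.range)) (n + 1)) :
    HasProjectiveDimensionLE (ModuleCat.of R N) (n + 1) := by
  have hrange : HasProjectiveDimensionLE (ModuleCat.of R f.range) (n + 1) :=
    (shortExact_of_function_exact f.ker.injective_subtype
      (f.ker_rangeRestrict ▸ f.rangeRestrict.exact_subtype_ker_map)
      f.surjective_rangeRestrict).hasProjectiveDimensionLT_X₃ (n + 1) hker hM
  exact (shortExact_of_function_exact f.range.injective_subtype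
    (LinearMap.exact_subtype_mkQ f.range) f.range.mkQ_surjective).hasProjectiveDimensionLT_X₂
      (n + 2) hrange hcoker

theorem exact_finsupp_mapRange {L M N : Type*} [AddCommGroup L] [AddCommGroup M] [AddCommGroup N]
    [Module R L] [Module R M] [Module R N] {f : L →ₗ[R] M} {g : M →ₗ[R] N}
    (inj : Function.Injective f) (hfg : Function.Exact f g) (ι : Type*) :
    Function.Exact (Finsupp.mapRange.linearMap (α := ι) f)
      (Finsupp.mapRange.linearMap (α := ι) g) := by
  rw [LinearMap.exact_iff, Finsupp.ker_mapRange, hfg.linearMap_ker_eq,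
    Finsupp.range_mapRange_linearMap f (LinearMap.ker_eq_bot.mpr inj)]

/-- The functor `M ↦ ι →₀ M`, that is, the coproduct of `ι` copies of a module. -/
noncomputable def finsuppFunctor (R ι : Type u) [Ring R] : ModuleCat.{u} R ⥤ ModuleCat.{u} R where
  obj M := ModuleCat.of R (ι →₀ M)
  map f := ModuleCat.ofHom (Finsupp.mapRange.linearMap f.hom)
  map_id _ := ModuleCat.hom_ext Finsupp.mapRange.linearMap_id
  map_comp f g := ModuleCat.hom_ext (Finsupp.mapRange.linearMap_comp g.hom f.hom)

instance (ι : Type u) : (finsuppFunctor R ι).PreservesZeroMorphisms where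
  map_zero _ _ := ModuleCat.hom_ext (LinearMap.ext fun _ => Finsupp.ext fun _ => rfl)

theorem shortExact_map_finsuppFunctor (ι : Type u) (T : ShortComplex (ModuleCat.{u} R))
    (hT : T.ShortExact) : (T.map (finsuppFunctor R ι)).ShortExact :=
  ModuleCat.shortComplex_shortExact _
    (exact_finsupp_mapRange hT.moduleCat_injective_f
      ((ShortComplex.ShortExact.moduleCat_exact_iff_function_exact T).mp hT.exact) ι)
    (Finsupp.mapRange_injective _ (map_zero _) hT.moduleCat_injective_f)
    (Finsupp.mapRange_surjective _ (map_zero _) hT.moduleCat_surjective_g)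

theorem hasProjectiveDimensionLE_zero_of_projective (M : Type u) [AddCommGroup M] [Module R M]
    [Module.Projective R M] : HasProjectiveDimensionLE (ModuleCat.of R M) 0 :=
  (projective_iff_hasProjectiveDimensionLE_zero _).mp
    ((IsProjective.iff_projective M).mp inferInstance)

open Classical in
theorem projective_finsupp (R ι P : Type*) [Ring R] [AddCommGroup P] [Module R P]
    [Module.Projective R P] : Module.Projective R (ι →₀ P) :=
  .of_equiv (finsuppLequivDFinsupp R).symm

theorem hasProjectiveDimensionLE_finsupp (ι : Type u) (M : ModuleCat.{u} R) (n : ℕ)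
    [HasProjectiveDimensionLE M n] : HasProjectiveDimensionLE (ModuleCat.of R (ι →₀ M)) n :=
  hasProjectiveDimensionLE_obj_of_shortExact_map (finsuppFunctor R ι)
    (shortExact_map_finsuppFunctor ι) (d := 0)
    (fun P hP => have := (IsProjective.iff_projective (R := R) P).mpr hP
      have := projective_finsupp R ι P
      hasProjectiveDimensionLE_zero_of_projective (ι →₀ P)) n M

theorem shortExact_map_restrictScalars (φ : R →+* S) (T : ShortComplex (ModuleCat.{u} S))
    (hT : T.ShortExact) : (T.map (ModuleCat.restrictScalars φ)).ShortExact :=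
  ModuleCat.shortComplex_shortExact _
    ((ShortComplex.ShortExact.moduleCat_exact_iff_function_exact T).mp hT.exact)
    hT.moduleCat_injective_f hT.moduleCat_surjective_g

theorem hasProjectiveDimensionLE_restrictScalars_of_projective (φ : R →+* S) {d : ℕ}
    [HasProjectiveDimensionLE ((ModuleCat.restrictScalars φ).obj (ModuleCat.of S S)) d]
    (P : ModuleCat.{u} S) (hP : Projective P) :
    HasProjectiveDimensionLE ((ModuleCat.restrictScalars φ).obj P) d := by
  obtain ⟨σ, hσ⟩ :=
    Module.projective_def'.mp ((IsProjective.iff_projective (R := S) P).mpr hP)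
  let retract : Retract P (ModuleCat.of S (P →₀ S)) :=
    { i := ModuleCat.ofHom σ
      r := ModuleCat.ofHom (Finsupp.linearCombination S id)
      retract := ModuleCat.hom_ext hσ }
  have : HasProjectiveDimensionLE
      ((ModuleCat.restrictScalars φ).obj (ModuleCat.of S (P →₀ S))) d :=
    hasProjectiveDimensionLE_finsupp P ((ModuleCat.restrictScalars φ).obj (ModuleCat.of S S)) d
  exact (retract.map (ModuleCat.restrictScalars φ)).hasProjectiveDimensionLT (d + 1)

theorem hasProjectiveDimensionLE_restrictScalars (φ : R →+* S) {d : ℕ}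
    [HasProjectiveDimensionLE ((ModuleCat.restrictScalars φ).obj (ModuleCat.of S S)) d]
    (n : ℕ) (V : ModuleCat.{u} S) [HasProjectiveDimensionLE V n] :
    HasProjectiveDimensionLE ((ModuleCat.restrictScalars φ).obj V) (n + d) :=
  hasProjectiveDimensionLE_obj_of_shortExact_map _ (shortExact_map_restrictScalars φ)
    (hasProjectiveDimensionLE_restrictScalars_of_projective φ) n V

theorem hasProjectiveDimensionLE_obj_of_isEquivalence {C D : Type*} [Category C] [Category D]
    [Abelian C] [Abelian D] [EnoughProjectives C] (F : C ⥤ D) [F.IsEquivalence] (n : ℕ) (X : C)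
    [HasProjectiveDimensionLE X n] : HasProjectiveDimensionLE (F.obj X) n :=
  have : F.Additive := Functor.additive_of_preserves_binary_products F
  hasProjectiveDimensionLE_obj_of_shortExact_map F (fun _ hT => hT.map_of_exact F) (d := 0)
    (fun P _ => (projective_iff_hasProjectiveDimensionLE_zero _).mp (F.projective_obj P)) n X

open Matrix.Module in
theorem hasProjectiveDimensionLE_matrix_pi (ι : Type) [Fintype ι] [DecidableEq ι] [Nonempty ι]
    (N : ModuleCat.{u} R) (n : ℕ) [HasProjectiveDimensionLE N n] :
    HasProjectiveDimensionLE (ModuleCat.of (Matrix ι ι R) (ι → N)) n :=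
  hasProjectiveDimensionLE_obj_of_isEquivalence
    (ModuleCat.matrixEquivalence R (Classical.arbitrary ι)).functor n N

end ProjectiveDimension

section BaseChange

open CategoryTheory TensorProduct

variable (A S : Type u) [CommRing A] [Ring S] [Algebra A S]

/-- Extension of scalars `M ↦ S ⊗[A] M` along a central ring map into a possibly noncommutative
ring, stated with the tensor product itself rather than with `ModuleCat.extendScalars`. -/
noncomputable def baseChangeFunctor : ModuleCat.{u} A ⥤ ModuleCat.{u} S where
  obj M := ModuleCat.of S (S ⊗[A] M)
  map f := ModuleCat.ofHom (f.hom.baseChange S)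
  map_id _ := ModuleCat.hom_ext LinearMap.baseChange_id
  map_comp f g := ModuleCat.hom_ext (LinearMap.baseChange_comp f.hom g.hom)

instance : (baseChangeFunctor A S).PreservesZeroMorphisms where
  map_zero _ _ := ModuleCat.hom_ext LinearMap.baseChange_zero

theorem shortExact_map_baseChangeFunctor [Module.Flat A S] (T : ShortComplex (ModuleCat.{u} A))
    (hT : T.ShortExact) : (T.map (baseChangeFunctor A S)).ShortExact :=
  ModuleCat.shortComplex_shortExact _
    (Module.Flat.lTensor_exact S
      ((ShortComplex.ShortExact.moduleCat_exact_iff_function_exact T).mp hT.exact))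
    (Module.Flat.lTensor_preserves_injective_linearMap T.f.hom hT.moduleCat_injective_f)
    (LinearMap.lTensor_surjective S hT.moduleCat_surjective_g)

theorem hasProjectiveDimensionLE_baseChange [Module.Flat A S] (M : ModuleCat.{u} A) (n : ℕ)
    [HasProjectiveDimensionLE M n] : HasProjectiveDimensionLE (ModuleCat.of S (S ⊗[A] M)) n :=
  hasProjectiveDimensionLE_obj_of_shortExact_map (baseChangeFunctor A S)
    (shortExact_map_baseChangeFunctor A S) (d := 0)
    (fun P hP => have := (IsProjective.iff_projective (R := A) P).mpr hP
      hasProjectiveDimensionLE_zero_of_projective (S ⊗[A] P)) n M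

end BaseChange

section GlobalDimension

open CategoryTheory

/-- `GlobalDimensionLE S n` says that the left global dimension of `S` is at most `n`: every left
`S`-module has projective dimension at most `n`. -/
def GlobalDimensionLE (S : Type u) [Ring S] (n : ℕ) : Prop :=
  ∀ M : ModuleCat.{u} S, HasProjectiveDimensionLE M n

namespace GlobalDimensionLE

theorem hasFiniteGlobalDimension {S : Type u} [Ring S] {n : ℕ} (h : GlobalDimensionLE S n) :
    HasFiniteGlobalDimension S := by
  refine ⟨n, fun M N _ _ _ _ i hi => ?_⟩
  let : HasDerivedCategory (ModuleCat S) := HasDerivedCategory.standard _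
  let : HasExt (ModuleCat S) := hasExt_of_hasDerivedCategory _
  have := h (ModuleCat.of S M)
  exact HasProjectiveDimensionLT.subsingleton (ModuleCat.of S M) (n + 1) i hi (ModuleCat.of S N)

theorem of_divisionRing (K : Type u) [DivisionRing K] : GlobalDimensionLE K 0 := fun M =>
  have : Module.Projective K M := @Module.Projective.of_free _ _ _ _ _ (.of_divisionRing K M)
  hasProjectiveDimensionLE_zero_of_projective M

theorem of_equivalence {R S : Type u} [Ring R] [Ring S] (e : ModuleCat.{u} R ≌ ModuleCat.{u} S)
    {n : ℕ} (h : GlobalDimensionLE R n) : GlobalDimensionLE S n := fun M =>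
  have := h (e.inverse.obj M)
  have : HasProjectiveDimensionLE ((e.inverse ⋙ e.functor).obj M) n :=
    hasProjectiveDimensionLE_obj_of_isEquivalence e.functor n (e.inverse.obj M)
  hasProjectiveDimensionLT_of_iso (e.counitIso.app M) (n + 1)

theorem of_ringEquiv {R S : Type u} [Ring R] [Ring S] (e : R ≃+* S) {n : ℕ}
    (h : GlobalDimensionLE R n) : GlobalDimensionLE S n :=
  h.of_equivalence (ModuleCat.restrictScalarsEquivalenceOfRingEquiv e.symm)

theorem of_localization {A : Type u} [CommRing A] {n : ℕ} (h : GlobalDimensionLE A n)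
    (S : Submonoid A) : GlobalDimensionLE (Localization S) n := by
  intro M
  let : Module A M := Module.compHom M (algebraMap A (Localization S))
  have : IsScalarTower A (Localization S) M := .of_compHom _ _ _
  have := h (ModuleCat.of A M)
  have := IsLocalization.flat (Localization S) S
  have := hasProjectiveDimensionLE_baseChange A (Localization S) (ModuleCat.of A M) n
  exact hasProjectiveDimensionLT_of_iso
    (IsLocalization.moduleLid S (Localization S) M).toModuleIso (n + 1)

end GlobalDimensionLE

end GlobalDimension

section PolynomialRing

open CategoryTheory Polynomial

variable (A M : Type u) [CommRing A] [AddCommGroup M] [Module A M] [Module A[X] M]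
  [IsScalarTower A A[X] M]

/-- The evaluation `Σ mᵢ Tⁱ ↦ Σ Xⁱ mᵢ` of polynomials with coefficients in an `A[X]`-module. -/
noncomputable def polynomialModuleEval : PolynomialModule A M →ₗ[A[X]] M where
  toFun v := PolynomialModule.eval X (PolynomialModule.map A[X] LinearMap.id v)
  map_add' v w := by rw [map_add, map_add]
  map_smul' p v := by
    rw [PolynomialModule.map_smul, PolynomialModule.eval_smul, algebraMap_eq,
      Polynomial.eval_map, eval₂_C_X, RingHom.id_apply]

/-- The difference `T - X` of the two actions of the variable on polynomials with coefficients in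
an `A[X]`-module: `T` shifts degrees and `X` acts on coefficients. -/
noncomputable def polynomialModuleShiftSub :
    PolynomialModule A M →ₗ[A[X]] PolynomialModule A M where
  toFun v := (X : A[X]) • v - PolynomialModule.map A (Algebra.lsmul A A M (X : A[X])) v
  map_add' v w := by rw [map_add, smul_add, add_sub_add_comm]
  map_smul' p v := by
    rw [PolynomialModule.map_smul, Algebra.algebraMap_self, Polynomial.map_id, smul_comm, smul_sub,
      RingHom.id_apply]

variable {A M}

theorem polynomialModuleEval_single (i : ℕ) (m : M) :
    polynomialModuleEval A M (.single A i m) = (X ^ i : A[X]) • m := by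
  simp [polynomialModuleEval]

theorem polynomialModuleShiftSub_single (i : ℕ) (m : M) :
    polynomialModuleShiftSub A M (.single A i m) =
      .single A (i + 1) m - .single A i ((X : A[X]) • m) := by
  simp [polynomialModuleShiftSub, ← monomial_one_one_eq_X, PolynomialModule.monomial_smul_single,
    add_comm]

theorem coeff_succ_polynomialModuleShiftSub (v : PolynomialModule A M) (i : ℕ) :
    (polynomialModuleShiftSub A M v).coeff (i + 1) =
      v.coeff i - (X : A[X]) • v.coeff (i + 1) := by
  induction v using PolynomialModule.induction_linear with
  | zero => simp
  | add v w hv hw => simp [hv, hw, add_sub_add_comm]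
  | single j m =>
    rw [polynomialModuleShiftSub_single]
    change (Finsupp.single (j + 1) m - Finsupp.single j ((X : A[X]) • m)) (i + 1) = _
    simp [Finsupp.single_apply]

theorem polynomialModuleShiftSub_injective :
    Function.Injective (polynomialModuleShiftSub A M) := by
  refine (injective_iff_map_eq_zero _).mpr fun v hv => ?_
  have coeff_eq (i : ℕ) : v.coeff i = (X : A[X]) • v.coeff (i + 1) := by
    rw [← sub_eq_zero, ← coeff_succ_polynomialModuleShiftSub, hv]
    rfl
  have coeff_eq_pow (j i : ℕ) : v.coeff i = (X ^ j : A[X]) • v.coeff (i + j) := by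
    induction j with
    | zero => simp
    | succ j ih => rw [ih, coeff_eq (i + j), smul_smul, ← pow_succ, add_assoc]
  ext i
  rw [coeff_eq_pow (v.coeff.support.sup id + 1) i, Finsupp.notMem_support_iff.mp, smul_zero]
  · rfl
  · exact fun hmem => by have := Finset.le_sup (f := id) hmem; simp only [id] at this; lia

theorem sub_single_polynomialModuleEval_mem_range (v : PolynomialModule A M) :
    v - .single A 0 (polynomialModuleEval A M v) ∈ (polynomialModuleShiftSub A M).range := by
  induction v using PolynomialModule.induction_linear with
  | zero => simp
  | add v w hv hw =>
    rw [map_add, PolynomialModule.single_add, add_sub_add_comm]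
    exact add_mem hv hw
  | single i m =>
    rw [polynomialModuleEval_single]
    induction i generalizing m with
    | zero => simp
    | succ i ih =>
      have step := add_mem (LinearMap.mem_range_self _ (.single A i m)) (ih ((X : A[X]) • m))
      rwa [polynomialModuleShiftSub_single, sub_add_sub_cancel, smul_smul, ← pow_succ] at step

theorem exact_polynomialModuleShiftSub_eval :
    Function.Exact (polynomialModuleShiftSub A M) (polynomialModuleEval A M) := by
  refine fun v => ⟨fun hv => ?_, ?_⟩
  · simpa [hv] using sub_single_polynomialModuleEval_mem_range v
  · rintro ⟨w, rfl⟩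
    induction w using PolynomialModule.induction_linear with
    | zero => simp
    | add v w hv hw => rw [map_add, map_add, hv, hw, add_zero]
    | single i m =>
      rw [polynomialModuleShiftSub_single, map_sub, polynomialModuleEval_single,
        polynomialModuleEval_single, smul_smul, ← pow_succ, sub_self]

theorem polynomialModuleEval_surjective : Function.Surjective (polynomialModuleEval A M) :=
  fun m => ⟨.single A 0 m, by rw [polynomialModuleEval_single, pow_zero, one_smul]⟩

namespace GlobalDimensionLE

theorem of_polynomial {n : ℕ} (h : GlobalDimensionLE A n) : GlobalDimensionLE A[X] (n + 1) := by
  intro M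
  let : Module A M := Module.compHom M (algebraMap A A[X])
  have : IsScalarTower A A[X] M := .of_compHom _ _ _
  have := h (ModuleCat.of A M)
  have := hasProjectiveDimensionLE_baseChange A A[X] (ModuleCat.of A M) n
  have left : HasProjectiveDimensionLT (ModuleCat.of A[X] (PolynomialModule A M)) (n + 1) :=
    hasProjectiveDimensionLT_of_iso
      (PolynomialModule.polynomialTensorProductLEquivPolynomialModule A M).toModuleIso (n + 1)
  exact (shortExact_of_function_exact polynomialModuleShiftSub_injective
    exact_polynomialModuleShiftSub_eval polynomialModuleEval_surjective).hasProjectiveDimensionLT_X₃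
    (n + 1) left (hasProjectiveDimensionLT_of_ge _ (n + 1) _ (by lia))

theorem of_mvPolynomial_fin {n : ℕ} (h : GlobalDimensionLE A n) (d : ℕ) :
    GlobalDimensionLE (MvPolynomial (Fin d) A) (n + d) := by
  induction d with
  | zero => exact h.of_ringEquiv (MvPolynomial.isEmptyRingEquiv A (Fin 0)).symm
  | succ d ih =>
    exact ih.of_polynomial.of_ringEquiv (MvPolynomial.finSuccEquiv A d).symm.toRingEquiv

end GlobalDimensionLE

end PolynomialRing

section TiledOrder

variable {Z : Type*} [CommRing Z]

theorem matrix_eq_zero_or_eq_zero_of_forall_mul_mul_eq_zero {ι : Type*} [Fintype ι]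
    [NoZeroDivisors Z] {a b : Matrix ι ι Z} (h : ∀ r, a * r * b = 0) : a = 0 ∨ b = 0 := by
  classical
  have apply_mul_apply (i j k l) : a i j * b k l = 0 := by
    have := congrFun₂ (h (Matrix.single j k 1)) i l
    rwa [Matrix.mul_assoc, Matrix.mul_apply, Finset.sum_eq_single j (fun x _ hx => by
      rw [Matrix.single_mul_apply_of_ne _ _ _ _ _ hx, mul_zero]) (by simp),
      Matrix.single_mul_apply_same, one_mul] at this
  by_contra! ⟨ha, hb⟩
  obtain ⟨i, j, hij⟩ : ∃ i j, a i j ≠ 0 := by simpa [← Matrix.ext_iff] using ha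
  obtain ⟨k, l, hkl⟩ : ∃ k l, b k l ≠ 0 := by simpa [← Matrix.ext_iff] using hb
  exact mul_ne_zero hij hkl (apply_mul_apply i j k l)

/-- The tiled order `(Z I; Z Z)` of an ideal `I`: the `2 × 2` matrices over `Z` whose upper right
entry lies in `I`. -/
def tiledOrder (I : Ideal Z) : Subalgebra Z (Matrix (Fin 2) (Fin 2) Z) where
  carrier := {a | a 0 1 ∈ I}
  mul_mem' {a b} ha hb := by
    change (a * b) 0 1 ∈ I
    rw [Matrix.mul_apply, Fin.sum_univ_two]
    exact add_mem (I.mul_mem_left _ hb) (I.mul_mem_right _ ha)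
  add_mem' := I.add_mem
  algebraMap_mem' _ := I.zero_mem

namespace tiledOrder

variable {I : Ideal Z}

theorem mem_iff {a : Matrix (Fin 2) (Fin 2) Z} : a ∈ tiledOrder I ↔ a 0 1 ∈ I :=
  Iff.rfl

@[ext]
theorem ext {x y : tiledOrder I} (h₀₀ : x.1 0 0 = y.1 0 0) (h₀₁ : x.1 0 1 = y.1 0 1)
    (h₁₀ : x.1 1 0 = y.1 1 0) (h₁₁ : x.1 1 1 = y.1 1 1) : x = y := by
  refine Subtype.ext (Matrix.ext fun i j => ?_)
  fin_cases i <;> fin_cases j <;> assumption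

theorem smul_mem {s : Z} (hs : s ∈ I) (a : Matrix (Fin 2) (Fin 2) Z) : s • a ∈ tiledOrder I :=
  I.mul_mem_right _ hs

theorem eq_zero_or_eq_zero_of_forall_mul_mul_eq_zero [IsDomain Z] (hI : I ≠ ⊥)
    (a b : tiledOrder I) (h : ∀ r, a * r * b = 0) : a = 0 ∨ b = 0 := by
  obtain ⟨s, hs, hs0⟩ := I.ne_bot_iff.mp hI
  have mul_mul_eq_zero (r : Matrix (Fin 2) (Fin 2) Z) : a.1 * r * b.1 = 0 := by
    have := congrArg Subtype.val (h ⟨s • r, smul_mem hs r⟩)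
    refine smul_right_injective _ hs0 ?_
    simpa using this
  simpa only [ZeroMemClass.coe_eq_zero] using
    matrix_eq_zero_or_eq_zero_of_forall_mul_mul_eq_zero mul_mul_eq_zero

theorem isNoetherianRing [IsNoetherianRing Z] (I : Ideal Z) : IsNoetherianRing (tiledOrder I) :=
  isNoetherian_of_tower Z
    (isNoetherian_of_injective (tiledOrder I).val.toLinearMap Subtype.val_injective)

variable (I)

/-- The idempotent `(1 0; 0 0)` of the tiled order. -/
def upperIdempotent : tiledOrder I := ⟨!![1, 0; 0, 0], I.zero_mem⟩

/-- The matrix unit `(0 0; 1 0)` of the tiled order. -/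
def lowerUnit : tiledOrder I := ⟨!![0, 0; 1, 0], I.zero_mem⟩

theorem upperIdempotent_mul_self :
    upperIdempotent I * upperIdempotent I = upperIdempotent I := by
  ext <;> simp [upperIdempotent]

theorem upperIdempotent_mul_lowerUnit : upperIdempotent I * lowerUnit I = 0 := by
  ext <;> simp [upperIdempotent, lowerUnit]

theorem lowerUnit_mul_upperIdempotent : lowerUnit I * upperIdempotent I = lowerUnit I := by
  ext <;> simp [upperIdempotent, lowerUnit]

variable {I}

theorem mul_upperIdempotent (x : tiledOrder I) :
    x * upperIdempotent I = x.1 0 0 • upperIdempotent I + x.1 1 0 • lowerUnit I := by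
  ext <;> simp [upperIdempotent, lowerUnit, Matrix.mul_apply]

theorem mul_lowerUnit (x : tiledOrder I) :
    x * lowerUnit I = x.1 0 1 • upperIdempotent I + x.1 1 1 • lowerUnit I := by
  ext <;> simp [upperIdempotent, lowerUnit, Matrix.mul_apply]

theorem coe_upperIdempotent_mul (x : tiledOrder I) :
    (upperIdempotent I * x).1 = !![x.1 0 0, x.1 0 1; 0, 0] := by
  rw [Matrix.eta_fin_two (upperIdempotent I * x).1]
  simp [upperIdempotent, Matrix.vecMul, dotProduct]

theorem coe_lowerUnit_mul (x : tiledOrder I) :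
    (lowerUnit I * x).1 = !![0, 0; x.1 0 0, x.1 0 1] := by
  rw [Matrix.eta_fin_two (lowerUnit I * x).1]
  simp [lowerUnit, Matrix.vecMul, dotProduct]

theorem algebraMap_injective (I : Ideal Z) : Function.Injective (algebraMap Z (tiledOrder I)) :=
  fun a b h => by
    simpa [Algebra.algebraMap_eq_smul_one] using congrArg (fun x : tiledOrder I => x.1 0 0) h

theorem isCentral (I : Ideal Z) : Algebra.IsCentral Z (tiledOrder I) where
  out x hx := by
    rw [Subalgebra.mem_center_iff] at hx
    have comm_upper := congrArg Subtype.val (hx (upperIdempotent I))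
    have comm_lower := congrArg Subtype.val (hx (lowerUnit I))
    have h₀₁ : x.1 0 1 = 0 := by
      simpa [upperIdempotent, Matrix.mul_apply] using congrFun₂ comm_upper 0 1
    have h₁₀ : x.1 1 0 = 0 := by
      simpa [upperIdempotent, Matrix.mul_apply, eq_comm] using congrFun₂ comm_upper 1 0
    have h₁₁ : x.1 0 0 = x.1 1 1 := by
      simpa [lowerUnit, Matrix.mul_apply] using congrFun₂ comm_lower 1 0
    refine Algebra.mem_bot.mpr ⟨x.1 0 0, ?_⟩
    ext <;> simp [Algebra.algebraMap_eq_smul_one, h₀₁, h₁₀, h₁₁]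

theorem nonempty_center_ringEquiv (I : Ideal Z) :
    Nonempty (Subring.center (tiledOrder I) ≃+* Z) := by
  have := isCentral I
  let centerEquiv : Subalgebra.center Z (tiledOrder I) ≃ₐ[Z] Z :=
    (Subalgebra.equivOfEq _ _ (Algebra.IsCentral.center_eq_bot Z _)).trans
      (Algebra.botEquivOfInjective (algebraMap_injective I))
  exact ⟨centerEquiv.toRingEquiv⟩

/-- The algebra map `x ↦ x i i` to `Z ⧸ I`; it is multiplicative because the upper right entry of
`x` vanishes modulo `I`. -/
def diagonalCharacter (I : Ideal Z) (i : Fin 2) : tiledOrder I →ₐ[Z] Z ⧸ I where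
  toFun x := Ideal.Quotient.mk I (x.1 i i)
  map_one' := by rw [OneMemClass.coe_one, Matrix.one_apply_eq, map_one]
  map_zero' := map_zero _
  map_add' _ _ := map_add _ _ _
  map_mul' x y := by
    have hx := Ideal.Quotient.eq_zero_iff_mem.mpr x.2
    have hy := Ideal.Quotient.eq_zero_iff_mem.mpr y.2
    fin_cases i <;> simp [Matrix.mul_apply, hx, hy]
  commutes' a := by
    rw [Subalgebra.coe_algebraMap, Matrix.algebraMap_matrix_apply, if_pos rfl]
    rfl

theorem diagonalCharacter_apply (i : Fin 2) (x : tiledOrder I) :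
    diagonalCharacter I i x = Ideal.Quotient.mk I (x.1 i i) :=
  rfl

end tiledOrder

end TiledOrder

section TiledOrderGlobalDimension

open CategoryTheory
open scoped Matrix.Module

namespace tiledOrder

section Corner

variable {Z : Type*} [CommRing Z] {I : Ideal Z} {M : Type*} [AddCommGroup M] [Module Z M]
  [Module (tiledOrder I) M] [IsScalarTower Z (tiledOrder I) M]

variable (I M) in
/-- The corner `e • M` of a module over the tiled order, for the idempotent `e = (1 0; 0 0)`, as a
module over the base ring. -/
def corner : Submodule Z M where
  carrier := {x | upperIdempotent I • x = x}
  add_mem' {x y} hx hy := (smul_add _ x y).trans (congrArg₂ _ hx hy)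
  zero_mem' := smul_zero _
  smul_mem' a x hx := (smul_comm _ a x).trans (congrArg _ hx)

theorem upperIdempotent_smul_of_mem_corner {x : M} (hx : x ∈ corner I M) :
    upperIdempotent I • x = x :=
  hx

theorem upperIdempotent_smul_mem_corner (x : M) : upperIdempotent I • x ∈ corner I M := by
  change upperIdempotent I • upperIdempotent I • x = _
  rw [smul_smul, upperIdempotent_mul_self]

theorem smul_of_mem_corner (r : tiledOrder I) {x : M} (hx : x ∈ corner I M) :
    r • x = r.1 0 0 • x + r.1 1 0 • lowerUnit I • x := by
  rw [← upperIdempotent_smul_of_mem_corner hx, smul_smul, mul_upperIdempotent, add_smul,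
    smul_assoc, smul_assoc, smul_smul (lowerUnit I), lowerUnit_mul_upperIdempotent]

theorem smul_lowerUnit_smul_of_mem_corner (r : tiledOrder I) {x : M} (hx : x ∈ corner I M) :
    r • lowerUnit I • x = r.1 0 1 • x + r.1 1 1 • lowerUnit I • x := by
  rw [smul_smul, mul_lowerUnit, add_smul, smul_assoc, smul_assoc,
    upperIdempotent_smul_of_mem_corner hx]

theorem smul_pi_apply {N : Type*} [AddCommGroup N] [Module Z N] (r : tiledOrder I)
    (v : Fin 2 → N) (i : Fin 2) : (r • v) i = r.1 i 0 • v 0 + r.1 i 1 • v 1 :=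
  Fin.sum_univ_two fun j => r.1 i j • v j

variable (I M) in
/-- The comparison map `(x, y) ↦ x + f • y`, `f = (0 0; 1 0)`, from the module over the full matrix
ring that is induced by the corner of `M` back to `M`. -/
def cornerMap : (Fin 2 → corner I M) →ₗ[tiledOrder I] M where
  toFun v := v 0 + lowerUnit I • (v 1 : M)
  map_add' v w := by
    simp only [Pi.add_apply, Submodule.coe_add, smul_add]
    abel
  map_smul' r v := by
    simp only [smul_pi_apply, Submodule.coe_add, Submodule.coe_smul, smul_add, RingHom.id_apply,
      smul_of_mem_corner r (v 0).2, smul_lowerUnit_smul_of_mem_corner r (v 1).2,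
      smul_comm (lowerUnit I)]
    abel

theorem cornerMap_apply (v : Fin 2 → corner I M) :
    cornerMap I M v = v 0 + lowerUnit I • (v 1 : M) :=
  rfl

theorem cornerMap_eq_zero_iff {v : Fin 2 → corner I M} :
    cornerMap I M v = 0 ↔ v 0 = 0 ∧ lowerUnit I • (v 1 : M) = 0 := by
  refine ⟨fun h => ?_, fun ⟨h₀, h₁⟩ => by
    rw [cornerMap_apply, h₀, h₁, Submodule.coe_zero, add_zero]⟩
  have h₀ : v 0 = 0 := by
    have := congrArg (upperIdempotent I • ·) h
    simpa only [cornerMap_apply, smul_add, smul_smul, upperIdempotent_mul_lowerUnit, zero_smul,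
      add_zero, smul_zero, upperIdempotent_smul_of_mem_corner (v 0).2, Submodule.coe_eq_zero]
      using this
  exact ⟨h₀, by simpa [cornerMap_apply, h₀] using h⟩

theorem upperIdempotent_smul_eq_zero_of_cornerMap_eq_zero {v : Fin 2 → corner I M}
    (hv : cornerMap I M v = 0) : upperIdempotent I • v = 0 := by
  obtain ⟨h₀, -⟩ := cornerMap_eq_zero_iff.mp hv
  ext i
  fin_cases i <;> simp [smul_pi_apply, h₀, upperIdempotent]

theorem upperIdempotent_smul_mem_range_cornerMap (x : M) :
    upperIdempotent I • x ∈ LinearMap.range (cornerMap I M) :=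
  ⟨![⟨_, upperIdempotent_smul_mem_corner x⟩, 0], by simp [cornerMap_apply]⟩

theorem upperIdempotent_smul_quotient (x : M ⧸ LinearMap.range (cornerMap I M)) :
    upperIdempotent I • x = 0 := by
  induction x using Submodule.Quotient.induction_on with
  | H x => exact (Submodule.Quotient.mk_eq_zero _).mpr (upperIdempotent_smul_mem_range_cornerMap x)

end Corner

section Self

variable {Z : Type*} [CommRing Z] (I : Ideal Z)

theorem cornerMap_self_injective : Function.Injective (cornerMap I (tiledOrder I)) := by
  refine (injective_iff_map_eq_zero _).mpr fun v hv => ?_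
  obtain ⟨h₀, h₁⟩ := cornerMap_eq_zero_iff.mp hv
  have lower_row := congrArg (fun x : tiledOrder I => x.1 1) h₁
  have h₁ : upperIdempotent I * (v 1).1 = 0 := by
    ext
    · simpa [coe_lowerUnit_mul, coe_upperIdempotent_mul] using congrFun lower_row 0
    · simpa [coe_lowerUnit_mul, coe_upperIdempotent_mul] using congrFun lower_row 1
    all_goals simp [coe_upperIdempotent_mul]
  ext1 i
  fin_cases i
  · exact h₀
  · exact Subtype.ext ((upperIdempotent_smul_of_mem_corner (v 1).2).symm.trans h₁)

theorem exact_cornerMap_diagonalCharacter :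
    Function.Exact (cornerMap I (tiledOrder I)) (diagonalCharacter I 1) := by
  intro x
  rw [diagonalCharacter_apply, Ideal.Quotient.eq_zero_iff_mem]
  constructor
  · intro hx
    let y : tiledOrder I := ⟨!![x.1 1 0, x.1 1 1; 0, 0], hx⟩
    have hy : upperIdempotent I * y = y := Subtype.ext (coe_upperIdempotent_mul y)
    refine ⟨![⟨_, upperIdempotent_smul_mem_corner x⟩, ⟨y, hy⟩], ?_⟩
    rw [cornerMap_apply]
    ext <;> simp [coe_upperIdempotent_mul, coe_lowerUnit_mul, y]
  · rintro ⟨v, rfl⟩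
    have h₀ : (v 0).1 = upperIdempotent I * (v 0).1 :=
      (upperIdempotent_smul_of_mem_corner (v 0).2).symm
    have : (cornerMap I (tiledOrder I) v).1 1 1 = (v 1).1.1 0 1 := by
      rw [cornerMap_apply, h₀]
      simp [coe_upperIdempotent_mul, coe_lowerUnit_mul]
    rw [this]
    exact (v 1).1.2

end Self

section GlobalDimension

theorem projective_matrix {Z : Type*} [CommRing Z] (I : Ideal Z) :
    Module.Projective (tiledOrder I) (Matrix (Fin 2) (Fin 2) Z) := by
  let columns : Matrix (Fin 2) (Fin 2) Z →ₗ[tiledOrder I] tiledOrder I × tiledOrder I :=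
    { toFun a := (⟨a * !![1, 0; 0, 0], by simp [mem_iff, Matrix.mul_apply]⟩,
        ⟨a * !![0, 0; 1, 0], by simp [mem_iff, Matrix.mul_apply]⟩)
      map_add' a b := Prod.ext (Subtype.ext (add_mul _ _ _)) (Subtype.ext (add_mul _ _ _))
      map_smul' r a := Prod.ext (Subtype.ext (mul_assoc _ _ _)) (Subtype.ext (mul_assoc _ _ _)) }
  let combine : tiledOrder I × tiledOrder I →ₗ[tiledOrder I] Matrix (Fin 2) (Fin 2) Z :=
    { toFun x := x.1.1 * !![1, 0; 0, 0] + x.2.1 * !![0, 1; 0, 0]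
      map_add' x y := by
        simp only [Prod.fst_add, Prod.snd_add, Subalgebra.coe_add, add_mul]
        abel
      map_smul' r x := by
        simp only [Prod.smul_fst, Prod.smul_snd, smul_eq_mul, Subalgebra.coe_mul, mul_assoc,
          RingHom.id_apply, Subalgebra.smul_def, mul_add] }
  refine .of_split columns combine (LinearMap.ext fun a => ?_)
  change a * !![1, 0; 0, 0] * !![1, 0; 0, 0] + a * !![0, 0; 1, 0] * !![0, 1; 0, 0] = a
  rw [mul_assoc, mul_assoc, ← mul_add]
  convert mul_one a
  simp [Matrix.one_fin_two]

variable {Z : Type u} [CommRing Z] {I : Ideal Z}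

theorem hasProjectiveDimensionLE_pi (N : Type u) [AddCommGroup N] [Module Z N] (n : ℕ)
    [HasProjectiveDimensionLE (ModuleCat.of Z N) n] :
    HasProjectiveDimensionLE (ModuleCat.of (tiledOrder I) (Fin 2 → N)) n := by
  let inclusion : tiledOrder I →+* Matrix (Fin 2) (Fin 2) Z := (tiledOrder I).val.toRingHom
  have := projective_matrix I
  have matrix := hasProjectiveDimensionLE_zero_of_projective (R := tiledOrder I)
    (Matrix (Fin 2) (Fin 2) Z)
  have : HasProjectiveDimensionLE ((ModuleCat.restrictScalars inclusion).obj
    (ModuleCat.of (Matrix (Fin 2) (Fin 2) Z) (Matrix (Fin 2) (Fin 2) Z))) 0 := matrix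
  have := hasProjectiveDimensionLE_matrix_pi (Fin 2) (ModuleCat.of Z N) n
  exact hasProjectiveDimensionLE_restrictScalars inclusion (d := 0) n
    (ModuleCat.of (Matrix (Fin 2) (Fin 2) Z) (Fin 2 → N))

theorem hasProjectiveDimensionLE_diagonalCharacter {n : ℕ} (hZ : GlobalDimensionLE Z n) :
    HasProjectiveDimensionLE ((ModuleCat.restrictScalars (diagonalCharacter I 1).toRingHom).obj
      (ModuleCat.of (Z ⧸ I) (Z ⧸ I))) (n + 1) := by
  let : Module (tiledOrder I) (Z ⧸ I) := Module.compHom _ (diagonalCharacter I 1).toRingHom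
  let character : tiledOrder I →ₗ[tiledOrder I] Z ⧸ I :=
    { toFun := diagonalCharacter I 1
      map_add' := map_add _
      map_smul' := map_mul _ }
  have surjective : Function.Surjective character := fun z => by
    obtain ⟨a, rfl⟩ := Ideal.Quotient.mk_surjective z
    exact ⟨algebraMap Z _ a, (diagonalCharacter I 1).commutes a⟩
  have := hZ (ModuleCat.of Z (corner I (tiledOrder I)))
  have left := hasProjectiveDimensionLE_pi (I := I) (corner I (tiledOrder I)) n
  have middle :
      HasProjectiveDimensionLT (ModuleCat.of (tiledOrder I) (tiledOrder I)) (n + 1 + 1) :=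
    have := hasProjectiveDimensionLE_zero_of_projective (R := tiledOrder I) (tiledOrder I)
    hasProjectiveDimensionLT_of_ge _ 1 _ (by lia)
  exact (shortExact_of_function_exact (g := character) (cornerMap_self_injective I)
    (exact_cornerMap_diagonalCharacter I) surjective).hasProjectiveDimensionLT_X₃
      (n + 1) left middle

theorem lowerUnit_smul_eq_zero {V : Type*} [AddCommGroup V] [Module (tiledOrder I) V] {v : V}
    (hv : upperIdempotent I • v = 0) : lowerUnit I • v = 0 := by
  rw [← lowerUnit_mul_upperIdempotent, mul_smul, hv, smul_zero]

section Annihilated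

variable {V : Type*} [AddCommGroup V] [Module Z V] [Module (tiledOrder I) V]
  [IsScalarTower Z (tiledOrder I) V]

theorem smul_eq_apply_one_one_smul (hV : ∀ v : V, upperIdempotent I • v = 0) (r : tiledOrder I)
    (v : V) : r • v = r.1 1 1 • v := by
  have decomposition : r = r.1 1 1 • (1 : tiledOrder I) +
      (upperIdempotent I * (r - r.1 1 1 • 1) + r.1 1 0 • lowerUnit I) := by
    ext <;> simp [coe_upperIdempotent_mul, lowerUnit]
  calc r • v = r.1 1 1 • v + (upperIdempotent I • (r - r.1 1 1 • 1) • v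
        + r.1 1 0 • lowerUnit I • v) := by
        conv_lhs => rw [decomposition, add_smul, add_smul, mul_smul, smul_assoc, smul_assoc,
          one_smul]
    _ = r.1 1 1 • v := by rw [hV, lowerUnit_smul_eq_zero (hV v), smul_zero, add_zero, add_zero]

theorem isTorsionBySet (hV : ∀ v : V, upperIdempotent I • v = 0) :
    Module.IsTorsionBySet Z V I := by
  rintro v ⟨b, hb⟩
  let y : tiledOrder I := ⟨!![0, b; 0, 0], hb⟩
  have : (lowerUnit I * y).1 1 1 = b := by simp [coe_lowerUnit_mul, y]
  calc b • v = (lowerUnit I * y) • v := by rw [smul_eq_apply_one_one_smul hV, this]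
    _ = 0 := by rw [mul_smul, lowerUnit_smul_eq_zero (hV _)]

end Annihilated

theorem hasProjectiveDimensionLE_of_upperIdempotent_smul_eq_zero {n m : ℕ}
    (hZ : GlobalDimensionLE Z n) (hQ : GlobalDimensionLE (Z ⧸ I) m)
    (V : ModuleCat.{u} (tiledOrder I)) (hV : ∀ v : V, upperIdempotent I • v = 0) :
    HasProjectiveDimensionLE V (m + (n + 1)) := by
  let : Module Z V := Module.compHom V (algebraMap Z (tiledOrder I))
  have : IsScalarTower Z (tiledOrder I) V := .of_compHom _ _ _
  have torsion := isTorsionBySet hV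
  let : Module (Z ⧸ I) V := torsion.module
  let reduced := (ModuleCat.restrictScalars (diagonalCharacter I 1).toRingHom).obj
    (ModuleCat.of (Z ⧸ I) V)
  let identity : reduced ≃ₗ[tiledOrder I] V :=
    { AddEquiv.refl V with
      map_smul' r v := (torsion.mk_smul _ v).trans (smul_eq_apply_one_one_smul hV r v).symm }
  have := hasProjectiveDimensionLE_diagonalCharacter (I := I) hZ
  have := hQ (ModuleCat.of (Z ⧸ I) V)
  have : HasProjectiveDimensionLE reduced (m + (n + 1)) :=
    hasProjectiveDimensionLE_restrictScalars (diagonalCharacter I 1).toRingHom m _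
  exact hasProjectiveDimensionLT_of_iso identity.toModuleIso _

theorem globalDimensionLE {n m : ℕ} (hZ : GlobalDimensionLE Z n)
    (hQ : GlobalDimensionLE (Z ⧸ I) m) : GlobalDimensionLE (tiledOrder I) (m + (n + 1) + 1) := by
  intro M
  let : Module Z M := Module.compHom M (algebraMap Z (tiledOrder I))
  have : IsScalarTower Z (tiledOrder I) M := .of_compHom _ _ _
  have killed := hasProjectiveDimensionLE_of_upperIdempotent_smul_eq_zero hZ hQ
  have hker := killed (ModuleCat.of _ (LinearMap.ker (cornerMap I M))) fun v =>
    Subtype.ext (upperIdempotent_smul_eq_zero_of_cornerMap_eq_zero v.2)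
  have hcoker := killed (ModuleCat.of _ (M ⧸ LinearMap.range (cornerMap I M)))
    upperIdempotent_smul_quotient
  have := hZ (ModuleCat.of Z (corner I M))
  have := hasProjectiveDimensionLE_pi (I := I) (corner I M) n
  exact hasProjectiveDimensionLE_of_ker_of_coker (cornerMap I M) hker
    (hasProjectiveDimensionLT_of_ge _ (n + 1) _ (by lia))
    (hasProjectiveDimensionLT_of_ge _ (m + (n + 1) + 1) _ (by lia))

end GlobalDimension

end tiledOrder

end TiledOrderGlobalDimension

section Azumaya

open TensorProduct

theorem azuMap_eq_mulLeftRight (C A : Type*) [CommRing C] [Ring A] [Algebra C A] :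
    azuMap C A = (AlgHom.mulLeftRight C A).toLinearMap := by
  ext a b x
  simp [azuMap, mul_assoc]

theorem isAzumayaAlg_of_isAzumaya (C A : Type*) [CommRing C] [Ring A] [Algebra C A]
    [hA : IsAzumaya C A] : IsAzumayaAlg C A :=
  ⟨inferInstance, inferInstance, inferInstance, azuMap_eq_mulLeftRight C A ▸ hA.bij⟩

theorem isAzumayaAlg_of_algEquiv_matrix {C A : Type*} [CommRing C] [Ring A] [Algebra C A]
    {ι : Type*} [Fintype ι] [DecidableEq ι] [Nonempty ι] (e : A ≃ₐ[C] Matrix ι ι C) :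
    IsAzumayaAlg C A :=
  have := IsAzumaya.matrix C ι
  have := IsAzumaya.of_AlgEquiv C _ _ e.symm
  isAzumayaAlg_of_isAzumaya C A

/-- Every `C`-linear endomorphism of an Azumaya algebra is a sum of maps `x ↦ a * x * b`, so it
preserves two-sided ideals. -/
theorem IsAzumayaAlg.map_linearMap_eq_zero {C A B : Type*} [CommRing C] [Ring A] [Algebra C A]
    [Ring B] (hA : IsAzumayaAlg C A) (χ : A →+* B) (φ : A →ₗ[C] A) {x : A} (hx : χ x = 0) :
    χ (φ x) = 0 := by
  obtain ⟨-, -, -, -, surjective⟩ := hA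
  obtain ⟨t, rfl⟩ := surjective φ
  induction t with
  | zero => simp
  | tmul a b => simp [azuMap, hx]
  | add s t hs ht => simp [hs, ht]

variable {Z : Type*} [CommRing Z] (S : Type*) [CommRing S] [Algebra Z S]

theorem coe_baseChange_smul_id {M : Type*} [AddCommGroup M] [Module Z M] {s : Z}
    (hs : IsUnit (algebraMap Z S s)) :
    ⇑((s • .id : M →ₗ[Z] M).baseChange S) = fun x => hs.unit • x := by
  rw [LinearMap.baseChange_smul, LinearMap.baseChange_id]
  exact funext fun x => (algebraMap_smul S s x).symm

theorem bijective_baseChange_of_comp_eq_smul_id {M N : Type*} [AddCommGroup M] [AddCommGroup N]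
    [Module Z M] [Module Z N] {f : M →ₗ[Z] N} {g : N →ₗ[Z] M} {s : Z}
    (hs : IsUnit (algebraMap Z S s)) (hgf : g ∘ₗ f = s • .id) (hfg : f ∘ₗ g = s • .id) :
    Function.Bijective (f.baseChange S) := by
  have left : g.baseChange S ∘ f.baseChange S = fun x => hs.unit • x := by
    rw [← LinearMap.coe_comp, ← LinearMap.baseChange_comp, hgf, coe_baseChange_smul_id]
  have right : f.baseChange S ∘ g.baseChange S = fun x => hs.unit • x := by
    rw [← LinearMap.coe_comp, ← LinearMap.baseChange_comp, hfg, coe_baseChange_smul_id]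
  exact ⟨.of_comp (left ▸ MulAction.injective hs.unit),
    .of_comp (right ▸ MulAction.surjective hs.unit)⟩

/-- `matrixEquivTensor` as an equivalence of algebras over the larger ring. -/
noncomputable def tensorMatrixAlgEquiv (ι : Type*) [Fintype ι] [DecidableEq ι] :
    S ⊗[Z] Matrix ι ι Z ≃ₐ[S] Matrix ι ι S :=
  AlgEquiv.ofRingEquiv (f := (matrixEquivTensor ι Z S).symm.toRingEquiv) fun r => by
    change (matrixEquivTensor ι Z S).symm (r ⊗ₜ 1) = _
    rw [matrixEquivTensor_apply_symm, Matrix.map_one _ (map_zero _) (map_one _),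
      Algebra.algebraMap_eq_smul_one]

namespace tiledOrder

variable {I : Ideal Z}

theorem bijective_baseChange_val {s : Z} (hsI : s ∈ I) (hs : IsUnit (algebraMap Z S s)) :
    Function.Bijective (Algebra.TensorProduct.map (AlgHom.id S S) (tiledOrder I).val) := by
  let scale : Matrix (Fin 2) (Fin 2) Z →ₗ[Z] tiledOrder I :=
    (s • .id : Matrix (Fin 2) (Fin 2) Z →ₗ[Z] _).codRestrict
      (Subalgebra.toSubmodule (tiledOrder I)) (smul_mem hsI)
  exact bijective_baseChange_of_comp_eq_smul_id S (f := (tiledOrder I).val.toLinearMap) (g := scale)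
    hs (LinearMap.ext fun _ => rfl) (LinearMap.ext fun _ => rfl)

theorem nonempty_tensor_algEquiv_matrix {s : Z} (hsI : s ∈ I) (hs : IsUnit (algebraMap Z S s)) :
    Nonempty (S ⊗[Z] tiledOrder I ≃ₐ[S] Matrix (Fin 2) (Fin 2) S) :=
  ⟨(AlgEquiv.ofBijective _ (bijective_baseChange_val S hsI hs)).trans
    (tensorMatrixAlgEquiv S (Fin 2))⟩

theorem not_isAzumayaAlg_tensor [Nontrivial (S ⊗[Z] (Z ⧸ I))] :
    ¬ IsAzumayaAlg S (S ⊗[Z] tiledOrder I) := by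
  intro hA
  let χ : S ⊗[Z] tiledOrder I →ₐ[S] S ⊗[Z] (Z ⧸ I) :=
    Algebra.TensorProduct.map (AlgHom.id S S) (diagonalCharacter I 0)
  let φ : tiledOrder I →ₗ[Z] tiledOrder I :=
    { toFun x := x.1 1 1 • 1
      map_add' _ _ := add_smul _ _ _
      map_smul' _ _ := mul_smul _ _ _ }
  let e₂ : tiledOrder I := 1 - upperIdempotent I
  have hχ : χ (1 ⊗ₜ e₂) = 0 := by simp [χ, e₂, diagonalCharacter_apply, upperIdempotent]
  have hφ : φ e₂ = 1 := by
    change (1 - upperIdempotent I).1 1 1 • (1 : tiledOrder I) = 1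
    simp [upperIdempotent]
  have := hA.map_linearMap_eq_zero χ.toRingHom (φ.baseChange S) hχ
  rw [LinearMap.baseChange_tmul, hφ] at this
  exact one_ne_zero (χ.map_one.symm.trans this)

variable (p : Ideal Z) [p.IsPrime]

theorem nonempty_localization_algEquiv_matrix (hp : ¬ I ≤ p) :
    Nonempty (Localization.AtPrime p ⊗[Z] tiledOrder I ≃ₐ[Localization.AtPrime p]
      Matrix (Fin 2) (Fin 2) (Localization.AtPrime p)) := by
  obtain ⟨s, hsI, hsp⟩ := SetLike.not_le_iff_exists.mp hp
  exact nonempty_tensor_algEquiv_matrix _ hsI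
    ((IsLocalization.AtPrime.isUnit_to_map_iff _ p s).mpr hsp)

theorem isAzumayaAlg_localization_iff :
    IsAzumayaAlg (Localization.AtPrime p) (Localization.AtPrime p ⊗[Z] tiledOrder I) ↔
      ¬ I ≤ p := by
  refine ⟨fun hA hp => ?_, fun hp => ?_⟩
  · have map_ne_top : I.map (algebraMap Z (Localization.AtPrime p)) ≠ ⊤ :=
      ((Ideal.map_mono hp).trans_lt (Localization.AtPrime.map_eq_maximalIdeal (I := p) ▸
        (IsLocalRing.maximalIdeal.isMaximal _).lt_top)).ne
    have := Ideal.Quotient.nontrivial_iff.mpr map_ne_top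
    have := (Algebra.TensorProduct.quotIdealMapEquivTensorQuot
      (Localization.AtPrime p) I).symm.toRingEquiv.nontrivial
    exact not_isAzumayaAlg_tensor _ hA
  · obtain ⟨e⟩ := nonempty_localization_algEquiv_matrix p hp
    exact isAzumayaAlg_of_algEquiv_matrix e

end tiledOrder

end Azumaya

section PrimeHeight

theorem two_le_cHeight {C : Type*} [CommRing C] {q₀ q₁ p : Ideal C} (hq₀ : q₀.IsPrime)
    (hq₁ : q₁.IsPrime) (hp : p.IsPrime) (h₀₁ : q₀ < q₁) (h₁ : q₁ < p) : 2 ≤ cHeight p := by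
  refine le_sSup ⟨2, rfl, ![q₀, q₁, p], ?_, ?_, rfl⟩
  · exact Fin.strictMono_iff_lt_succ.mpr (Fin.forall_fin_two.mpr ⟨h₀₁, h₁⟩)
  · exact Fin.forall_fin_succ.mpr ⟨hq₀, Fin.forall_fin_two.mpr ⟨hq₁, hp⟩⟩

end PrimeHeight

section OriginIdeal

open MvPolynomial

theorem idealOfVars_eq_ker_constantCoeff (σ R : Type*) [CommRing R] :
    idealOfVars σ R = RingHom.ker (constantCoeff (σ := σ) (R := R)) := by
  ext p
  rw [← pow_one (idealOfVars σ R), mem_pow_idealOfVars_iff', RingHom.mem_ker]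
  simp [constantCoeff_eq, Finsupp.degree_eq_zero_iff]

theorem idealOfVars_isMaximal (σ K : Type*) [Field K] : (idealOfVars σ K).IsMaximal := by
  rw [idealOfVars_eq_ker_constantCoeff]
  exact RingHom.ker_isMaximal_of_surjective _ fun c => ⟨C c, constantCoeff_C σ c⟩

theorem mXY_eq_idealOfVars : mXY k = idealOfVars (Fin 2) k := by
  rw [mXY, idealOfVars]
  congr 1
  ext
  simp [eq_comm]

theorem mXY_isMaximal : (mXY k).IsMaximal :=
  mXY_eq_idealOfVars k ▸ idealOfVars_isMaximal (Fin 2) k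

theorem mXY_ne_bot : mXY k ≠ ⊥ :=
  (Submodule.ne_bot_iff _).mpr ⟨X 0, Ideal.subset_span (.inl rfl), X_ne_zero 0⟩

theorem globalDimensionLE_mXY_quotient : GlobalDimensionLE (MvPolynomial (Fin 2) k ⧸ mXY k) 0 :=
  have := mXY_isMaximal k
  let := Ideal.Quotient.field (mXY k)
  .of_divisionRing _

variable {k} in
theorem not_mXY_le_of_cHeight_eq_one {p : Ideal (MvPolynomial (Fin 2) k)} (hp : p.IsPrime)
    (height : cHeight p = 1) : ¬ mXY k ≤ p := by
  intro hle
  have hX : Prime (X 0 : MvPolynomial (Fin 2) k) := X_prime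
  have X_lt : Ideal.span {X 0} < p := by
    refine lt_of_le_of_ne ?_ fun h => ?_
    · exact (Ideal.span_singleton_le_iff_mem p).mpr (hle (Ideal.subset_span (.inl rfl)))
    · have : X 1 ∈ Ideal.span {(X 0 : MvPolynomial (Fin 2) k)} :=
        h ▸ hle (Ideal.subset_span (.inr rfl))
      simp [Ideal.mem_span_singleton, X_dvd_X] at this
  have := two_le_cHeight Ideal.isPrime_bot ((Ideal.span_singleton_prime hX.ne_zero).mpr hX) hp
    (bot_lt_iff_ne_bot.mpr (mt Ideal.span_singleton_eq_bot.mp hX.ne_zero)) X_lt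
  exact absurd (height ▸ this) (by decide)

end OriginIdeal

open TensorProduct in
set_option synthInstance.maxHeartbeats 1000000 in
set_option maxHeartbeats 2000000 in
/-- The tiled order `R = (Z m; Z Z)` over `Z = k[X,Y]` is prime and noetherian with
centre isomorphic to `Z`, has finite global dimension, and satisfies
`R_p ≅ M₂(Z_p)` for every height-one prime `p` of `Z` (so it is Azumaya in height
one); yet its Azumaya locus is `Maxspec Z ∖ {m}`, a proper subset of the smooth
locus, which is all of `Maxspec Z`. -/
theorem tiled_order_example :
    (∀ a b : TiledR k, (∀ r : TiledR k, a * r * b = 0) → a = 0 ∨ b = 0) ∧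
    IsNoetherianRing (TiledR k) ∧
    Nonempty (Subring.center (TiledR k) ≃+* MvPolynomial (Fin 2) k) ∧
    HasFiniteGlobalDimension (TiledR k) ∧
    (∀ (p : Ideal (MvPolynomial (Fin 2) k)) (_ : p.IsPrime), cHeight p = 1 →
      Nonempty ((Localization.AtPrime p ⊗[MvPolynomial (Fin 2) k] TiledR k) ≃+*
        Matrix (Fin 2) (Fin 2) (Localization.AtPrime p))) ∧
    (mXY k).IsMaximal ∧
    (∀ (n : Ideal (MvPolynomial (Fin 2) k)) (hn : n.IsMaximal),
      haveI : n.IsPrime := hn.isPrime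
      (IsAzumayaAlg (Localization.AtPrime n)
          (Localization.AtPrime n ⊗[MvPolynomial (Fin 2) k] TiledR k) ↔ n ≠ mXY k)) ∧
    (∀ (n : Ideal (MvPolynomial (Fin 2) k)) (hn : n.IsMaximal),
      haveI : n.IsPrime := hn.isPrime
      HasFiniteGlobalDimension (Localization.AtPrime n)) := by
  have gldim_Z : GlobalDimensionLE (MvPolynomial (Fin 2) k) (0 + 2) :=
    (GlobalDimensionLE.of_divisionRing k).of_mvPolynomial_fin 2
  -- `TiledR k` is definitionally `tiledOrder (mXY k)`.
  have gldim_R : GlobalDimensionLE (TiledR k) (0 + (0 + 2 + 1) + 1) :=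
    tiledOrder.globalDimensionLE gldim_Z (globalDimensionLE_mXY_quotient k)
  refine ⟨tiledOrder.eq_zero_or_eq_zero_of_forall_mul_mul_eq_zero (mXY_ne_bot k),
    tiledOrder.isNoetherianRing (mXY k), tiledOrder.nonempty_center_ringEquiv (mXY k),
    gldim_R.hasFiniteGlobalDimension,
    fun p hp height => ?_, mXY_isMaximal k, fun n hn => ?_, fun n hn => ?_⟩
  · obtain ⟨e⟩ := tiledOrder.nonempty_localization_algEquiv_matrix p
      (not_mXY_le_of_cHeight_eq_one hp height)
    exact ⟨e.toRingEquiv⟩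
  · have : n.IsPrime := hn.isPrime
    have le_iff : mXY k ≤ n ↔ n = mXY k :=
      ⟨fun h => ((mXY_isMaximal k).eq_of_le hn.ne_top h).symm, ge_of_eq⟩
    exact (tiledOrder.isAzumayaAlg_localization_iff n).trans (not_congr le_iff)
  · exact (gldim_Z.of_localization _).hasFiniteGlobalDimension
end

section
/- Let k be a field and R the algebra of 2×2 upper triangular matrices over k, with I the ideal of matrices with zero second row. Then j^ℓ_R(R/I) = 1 while j^r_R(R/I) = 0, where j^ℓ and j^r denote the left and right homological grades min{i : Ext^i_R(M,R) ≠ 0}. In particular R is not grade symmetric. -/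
set_option synthInstance.maxHeartbeats 1000000
set_option maxHeartbeats 2000000

universe u

/-- `R` is grade symmetric: the left and right homological grades agree on every
central `R`-bimodule. -/
def GradeSymmetric (R : Type u) [Ring R] : Prop :=
  ∀ (M : Type u) [AddCommGroup M] [Module R M] [Module Rᵐᵒᵖ M]
    [SMulCommClass R Rᵐᵒᵖ M] [Module.Finite R M],
    (∀ (z : Subring.center R) (m : M), (z : R) • m = MulOpposite.op (z : R) • m) →
    homGrade R M = homGrade Rᵐᵒᵖ M

variable (k : Type u) [Field k]

/-- The algebra of 2×2 upper triangular matrices over `k`. -/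
def Tri : Subalgebra k (Matrix (Fin 2) (Fin 2) k) where
  carrier := {A | A 1 0 = 0}
  mul_mem' := by
    intro a b ha hb
    simp only [Set.mem_setOf_eq] at *
    simp [Matrix.mul_apply, Fin.sum_univ_two, ha, hb]
  add_mem' := by
    intro a b ha hb
    simp only [Set.mem_setOf_eq] at *
    simp [ha, hb]
  algebraMap_mem' := by
    intro c
    simp [Matrix.algebraMap_matrix_apply]

/-- The two-sided ideal of upper triangular matrices with zero second row. -/
def triIdeal : TwoSidedIdeal (Tri k) :=
  TwoSidedIdeal.mk' {a : Tri k | (a : Matrix (Fin 2) (Fin 2) k) 1 1 = 0}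
    (by simp)
    (by
      intro x y hx hy
      simp only [Set.mem_setOf_eq] at *
      push_cast
      simp [hx, hy])
    (by
      intro x hx
      simp only [Set.mem_setOf_eq] at *
      push_cast
      simp [hx])
    (by
      intro x y hy
      have hx' : (x : Matrix (Fin 2) (Fin 2) k) 1 0 = 0 := x.2
      simp only [Set.mem_setOf_eq] at *
      push_cast
      simp [Matrix.mul_apply, Fin.sum_univ_two, hx', hy])
    (by
      intro x y hx
      have hx' : (x : Matrix (Fin 2) (Fin 2) k) 1 0 = 0 := x.2
      simp only [Set.mem_setOf_eq] at *
      push_cast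
      simp [Matrix.mul_apply, Fin.sum_univ_two, hx', hx])

/-!
For a left ideal `J` of a ring `S`, evaluation at the class of `1` identifies `Hom_S(S/J, S)` with
`{s | J s = 0}`, and the connecting map of `0 → J → S → S/J → 0` embeds the maps `J → S` modulo
right multiplications by elements of `S` into `Ext^1_S(S/J, S)`. For triangular matrices, no
nonzero `r : R` satisfies `I r = 0`, while right multiplication by the matrix unit `e₂₁`, which lies
outside `R`, maps `I` into `R` and is not right multiplication by any element of `R`. On the other
side `e₂₂ I = 0`, so `e₂₂` gives a nonzero map of right modules `R/I → R`. The bimodule `R/I` is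
central, hence refutes grade symmetry.
-/

section HomologicalGrade

open CategoryTheory

variable {S : Type u} [Ring S] {M M' N P : Type u} [AddCommGroup M] [Module S M]
  [AddCommGroup M'] [Module S M'] [AddCommGroup N] [Module S N] [AddCommGroup P] [Module S P]

theorem subsingleton_extGroup_zero_iff :
    Subsingleton (ExtGroup S M N 0) ↔ Subsingleton (M →ₗ[S] N) :=
  letI : HasDerivedCategory (ModuleCat S) := HasDerivedCategory.standard _
  letI : HasExt (ModuleCat S) := hasExt_of_hasDerivedCategory _
  (Abelian.Ext.homEquiv₀.trans ModuleCat.homEquiv).subsingleton_congr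

theorem exists_linearMap_extending_of_subsingleton_extGroup_one {π : P →ₗ[S] M}
    (hπ : Function.Surjective π) (hExt : Subsingleton (ExtGroup S M N 1))
    (f : LinearMap.ker π →ₗ[S] N) :
    ∃ g : P →ₗ[S] N, g ∘ₗ (LinearMap.ker π).subtype = f := by
  let : HasDerivedCategory (ModuleCat S) := HasDerivedCategory.standard _
  let : HasExt (ModuleCat S) := hasExt_of_hasDerivedCategory _
  have hExt' : Subsingleton (Abelian.Ext (ModuleCat.of S M) (ModuleCat.of S N) 1) := hExt
  obtain ⟨x, hx⟩ := Abelian.Ext.contravariant_sequence_exact₁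
    (LinearMap.shortExact_shortComplexKer hπ) (ModuleCat.of S N)
    (Abelian.Ext.mk₀ (ModuleCat.ofHom f)) rfl (hExt'.elim _ _)
  obtain ⟨g, rfl⟩ := (Abelian.Ext.mk₀_bijective _ _).surjective x
  rw [Abelian.Ext.mk₀_comp_mk₀] at hx
  exact ⟨g.hom, congrArg ModuleCat.Hom.hom ((Abelian.Ext.mk₀_bijective _ _).injective hx)⟩

theorem subsingleton_extGroup_congr_left (e : M ≃ₗ[S] M') (i : ℕ) :
    Subsingleton (ExtGroup S M N i) ↔ Subsingleton (ExtGroup S M' N i) :=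
  letI : HasDerivedCategory (ModuleCat S) := HasDerivedCategory.standard _
  letI : HasExt (ModuleCat S) := hasExt_of_hasDerivedCategory _
  (((Abelian.extFunctor i).mapIso e.symm.toModuleIso.op).app
    (ModuleCat.of S N)).addCommGroupIsoToAddEquiv.toEquiv.subsingleton_congr

theorem homGrade_congr (e : M ≃ₗ[S] M') : homGrade S M = homGrade S M' := by
  simp only [homGrade, subsingleton_extGroup_congr_left e]

theorem homGrade_eq_natCast {i : ℕ} (hlt : ∀ j < i, Subsingleton (ExtGroup S M S j))
    (hi : ¬ Subsingleton (ExtGroup S M S i)) : homGrade S M = i := by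
  refine le_antisymm (sInf_le ⟨i, rfl, hi⟩) (le_sInf ?_)
  rintro _ ⟨j, rfl, hj⟩
  exact Nat.cast_le.mpr (not_lt.mp fun hji => hj (hlt j hji))

end HomologicalGrade

section CyclicModule

variable {S : Type u} [Ring S] {J : Ideal S}

theorem subsingleton_quotient_linearMap_iff {N : Type*} [AddCommGroup N] [Module S N] :
    Subsingleton (S ⧸ J →ₗ[S] N) ↔ ∀ n : N, (∀ x ∈ J, x • n = 0) → n = 0 := by
  constructor
  · intro hHom n hn
    let φ : S ⧸ J →ₗ[S] N := J.liftQ (LinearMap.toSpanSingleton S N n) hn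
    calc n = φ (Submodule.Quotient.mk 1) := (one_smul S n).symm
      _ = 0 := LinearMap.congr_fun (hHom.elim φ 0) _
  · refine fun hann => subsingleton_of_forall_eq 0 fun φ => ?_
    have hφ : φ (Submodule.Quotient.mk 1) = 0 := hann _ fun x hx => by
      rw [← map_smul, ← Submodule.Quotient.mk_smul, smul_eq_mul, mul_one,
        (Submodule.Quotient.mk_eq_zero J).mpr hx, map_zero]
    ext
    exact hφ

theorem exists_forall_eq_smul_of_subsingleton_extGroup_one {N : Type u} [AddCommGroup N]
    [Module S N] (hExt : Subsingleton (ExtGroup S (S ⧸ J) N 1)) (f : J →ₗ[S] N) :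
    ∃ n : N, ∀ x : J, f x = (x : S) • n := by
  let e : LinearMap.ker J.mkQ ≃ₗ[S] J := LinearEquiv.ofEq _ _ J.ker_mkQ
  obtain ⟨g, hg⟩ := exists_linearMap_extending_of_subsingleton_extGroup_one
    J.mkQ_surjective hExt (f ∘ₗ e.toLinearMap)
  refine ⟨g 1, fun x => ?_⟩
  calc f x = g x := (LinearMap.congr_fun hg (e.symm x)).symm
    _ = (x : S) • g 1 := by rw [← map_smul, smul_eq_mul, mul_one]

theorem homGrade_quotient_eq_zero {s : S} (hs : ∀ x ∈ J, x * s = 0) (hs₀ : s ≠ 0) :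
    homGrade S (S ⧸ J) = 0 := by
  refine homGrade_eq_natCast (i := 0) (by simp) ?_
  rw [subsingleton_extGroup_zero_iff, subsingleton_quotient_linearMap_iff]
  exact fun hann => hs₀ (hann s hs)

theorem homGrade_quotient_eq_one (hann : ∀ s : S, (∀ x ∈ J, x * s = 0) → s = 0)
    (f : J →ₗ[S] S) (hf : ¬ ∃ s : S, ∀ x : J, f x = x * s) : homGrade S (S ⧸ J) = 1 := by
  refine homGrade_eq_natCast (i := 1) (fun j hj => ?_)
    fun hExt => hf (exists_forall_eq_smul_of_subsingleton_extGroup_one hExt f)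
  rw [Nat.lt_one_iff.mp hj, subsingleton_extGroup_zero_iff, subsingleton_quotient_linearMap_iff]
  exact hann

end CyclicModule

section QuotientBimodule

variable {R : Type u} [Ring R] (P : TwoSidedIdeal R)

/-- The right `R`-module structure on the quotient ring `R/P`, which together with the usual left
structure makes `R/P` an `R`-bimodule. -/
abbrev quotientRightModule : Module Rᵐᵒᵖ (R ⧸ P.asIdeal) :=
  Module.compHom _ (Ideal.Quotient.mk P.asIdeal).op

attribute [local instance] quotientRightModule

theorem op_smul_quotient_mk (r x : R) :
    MulOpposite.op r • Ideal.Quotient.mk P.asIdeal x = Ideal.Quotient.mk P.asIdeal (x * r) :=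
  (map_mul _ x r).symm

/-- `R/P` as a right module, in its two guises: a quotient of `Rᵐᵒᵖ` and the right half of the
bimodule `R/P`. -/
noncomputable def opQuotientEquiv :
    (Rᵐᵒᵖ ⧸ tsOpIdeal P) ≃ₗ[Rᵐᵒᵖ] R ⧸ P.asIdeal :=
  let π : Rᵐᵒᵖ →ₗ[Rᵐᵒᵖ] R ⧸ P.asIdeal := LinearMap.toSpanSingleton _ _ 1
  have hπ (x : Rᵐᵒᵖ) : π x = Ideal.Quotient.mk P.asIdeal x.unop :=
    (op_smul_quotient_mk P x.unop 1).trans (by rw [one_mul])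
  have hker : tsOpIdeal P = LinearMap.ker π := by
    ext x
    rw [LinearMap.mem_ker, hπ, Ideal.Quotient.eq_zero_iff_mem, TwoSidedIdeal.mem_asIdeal]
    rfl
  have hsurj : Function.Surjective π := fun y => by
    obtain ⟨x, rfl⟩ := Ideal.Quotient.mk_surjective y
    exact ⟨MulOpposite.op x, hπ _⟩
  (Submodule.quotEquivOfEq _ _ hker).trans (π.quotKerEquivOfSurjective hsurj)

theorem smulCommClass_quotient : SMulCommClass R Rᵐᵒᵖ (R ⧸ P.asIdeal) where
  smul_comm r s m := by
    obtain ⟨x, rfl⟩ := Ideal.Quotient.mk_surjective m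
    exact congrArg (Ideal.Quotient.mk P.asIdeal) (mul_assoc r x s.unop).symm

theorem GradeSymmetric.homGrade_quotient_eq (hR : GradeSymmetric R) :
    homGrade R (R ⧸ P.asIdeal) = homGrade Rᵐᵒᵖ (Rᵐᵒᵖ ⧸ tsOpIdeal P) := by
  have := smulCommClass_quotient P
  rw [homGrade_congr (opQuotientEquiv P)]
  refine hR (R ⧸ P.asIdeal) fun z m => ?_
  obtain ⟨x, rfl⟩ := Ideal.Quotient.mk_surjective m
  rw [op_smul_quotient_mk, Subring.mem_center_iff.mp z.2 x]
  rfl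

end QuotientBimodule

section TriangularMatrices

variable {k}

theorem mem_tri_iff {A : Matrix (Fin 2) (Fin 2) k} : A ∈ Tri k ↔ A 1 0 = 0 :=
  Iff.rfl

/-- The upper triangular matrix with rows `(a, b)` and `(0, d)`. -/
def triOf (a b d : k) : Tri k := ⟨!![a, b; 0, d], mem_tri_iff.mpr rfl⟩

theorem exists_eq_triOf (x : Tri k) : ∃ a b d : k, x = triOf a b d := by
  refine ⟨x.1 0 0, x.1 0 1, x.1 1 1, Subtype.ext ?_⟩
  have hx : x.1 1 0 = 0 := mem_tri_iff.mp x.2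
  rw [Matrix.eta_fin_two x.1, hx]
  rfl

theorem triOf_inj {a b d a' b' d' : k} :
    triOf a b d = triOf a' b' d' ↔ a = a' ∧ b = b' ∧ d = d' := by
  simp [triOf, Subtype.ext_iff, and_assoc]

theorem triOf_zero : triOf (0 : k) 0 0 = 0 :=
  Subtype.ext (Matrix.eta_fin_two 0).symm

theorem triOf_eq_zero_iff {a b d : k} : triOf a b d = 0 ↔ a = 0 ∧ b = 0 ∧ d = 0 := by
  rw [← triOf_zero, triOf_inj]

theorem triOf_mul_triOf (a b d a' b' d' : k) :
    triOf a b d * triOf a' b' d' = triOf (a * a') (a * b' + b * d') (d * d') :=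
  Subtype.ext (by simp [triOf])

theorem mem_triIdeal_iff {x : Tri k} : x ∈ triIdeal k ↔ x.1 1 1 = 0 :=
  TwoSidedIdeal.mem_mk' _ _ _ _ _ _ x

theorem triOf_mem_triIdeal_iff {a b d : k} : triOf a b d ∈ triIdeal k ↔ d = 0 :=
  mem_triIdeal_iff

theorem eq_zero_of_triIdeal_mul_eq_zero {r : Tri k} (hr : ∀ x ∈ triIdeal k, x * r = 0) :
    r = 0 := by
  obtain ⟨a, b, d, rfl⟩ := exists_eq_triOf r
  have he₁₁ := hr (triOf 1 0 0) (triOf_mem_triIdeal_iff.mpr rfl)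
  have he₁₂ := hr (triOf 0 1 0) (triOf_mem_triIdeal_iff.mpr rfl)
  simp_all [triOf_mul_triOf, triOf_eq_zero_iff]

theorem triOf_mul_eq_zero_of_mem_triIdeal (d : k) {x : Tri k} (hx : x ∈ triIdeal k) :
    triOf 0 0 d * x = 0 := by
  obtain ⟨a, b, c, rfl⟩ := exists_eq_triOf x
  obtain rfl := triOf_mem_triIdeal_iff.mp hx
  simp [triOf_mul_triOf, triOf_zero]

/-- Right multiplication by the matrix unit `e₂₁`, a homomorphism of left modules from the ideal
`I` to `R` although `e₂₁` is not in `R`. -/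
def triIdealMulE21 : (triIdeal k).asIdeal →ₗ[Tri k] Tri k where
  toFun x := ⟨x.1.1 * !![0, 0; 1, 0], by
    have hx : x.1.1 1 1 = 0 := mem_triIdeal_iff.mp (TwoSidedIdeal.mem_asIdeal.mp x.2)
    simp [mem_tri_iff, Matrix.mul_apply, hx]⟩
  map_add' x y := Subtype.ext (add_mul x.1.1 y.1.1 _)
  map_smul' r x := Subtype.ext (mul_assoc r.1 x.1.1 _)

theorem triIdealMulE21_triOf {a b d : k} (h : triOf a b d ∈ (triIdeal k).asIdeal) :
    triIdealMulE21 ⟨triOf a b d, h⟩ = triOf b 0 0 := by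
  obtain rfl : d = 0 := triOf_mem_triIdeal_iff.mp (TwoSidedIdeal.mem_asIdeal.mp h)
  exact Subtype.ext ((Matrix.mul_fin_two ..).trans (by simp [triOf]))

theorem not_exists_triIdealMulE21_eq_mul :
    ¬ ∃ r : Tri k, ∀ x : (triIdeal k).asIdeal, triIdealMulE21 x = x * r := by
  rintro ⟨r, hr⟩
  obtain ⟨a, b, d, rfl⟩ := exists_eq_triOf r
  have he₁₂ := hr ⟨triOf 0 1 0, TwoSidedIdeal.mem_asIdeal.mpr (triOf_mem_triIdeal_iff.mpr rfl)⟩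
  rw [triIdealMulE21_triOf, triOf_mul_triOf, triOf_inj, zero_mul] at he₁₂
  exact one_ne_zero he₁₂.1

variable (k)

theorem homGrade_quotient_triIdeal : homGrade (Tri k) (Tri k ⧸ (triIdeal k).asIdeal) = 1 :=
  homGrade_quotient_eq_one
    (fun _ hr => eq_zero_of_triIdeal_mul_eq_zero fun x hx =>
      hr x (TwoSidedIdeal.mem_asIdeal.mpr hx))
    triIdealMulE21 not_exists_triIdealMulE21_eq_mul

theorem homGrade_op_quotient_triIdeal :
    homGrade (Tri k)ᵐᵒᵖ ((Tri k)ᵐᵒᵖ ⧸ tsOpIdeal (triIdeal k)) = 0 := by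
  refine homGrade_quotient_eq_zero (s := MulOpposite.op (triOf 0 0 1)) (fun x hx => ?_) ?_
  · exact congrArg MulOpposite.op (triOf_mul_eq_zero_of_mem_triIdeal 1 hx)
  · simp [triOf_eq_zero_iff]

end TriangularMatrices

/-- Let `R` be the algebra of 2×2 upper triangular matrices over a field `k`, and `I`
the ideal of matrices with zero second row.  Then the left homological grade of `R/I`
is `1` while its right homological grade is `0`; in particular `R` is not grade
symmetric. -/
theorem triangular_not_grade_symmetric :
    homGrade (Tri k) ((Tri k) ⧸ TwoSidedIdeal.asIdeal (triIdeal k)) = 1 ∧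
    homGrade (Tri k)ᵐᵒᵖ ((Tri k)ᵐᵒᵖ ⧸ tsOpIdeal (triIdeal k)) = 0 ∧
    ¬ GradeSymmetric (Tri k) := by
  refine ⟨homGrade_quotient_triIdeal k, homGrade_op_quotient_triIdeal k, fun hsymm => ?_⟩
  have hgrade := hsymm.homGrade_quotient_eq (triIdeal k)
  rw [homGrade_quotient_triIdeal, homGrade_op_quotient_triIdeal] at hgrade
  exact one_ne_zero hgrade
end

section
/- Let R be a noetherian ring which is a finite module over its center Z(R), and suppose that for every prime ideal P of R one has Kdim(R) = Kdim(R/P) + j_R(R/P), where j_R denotes the (left and right) homological grade. Then for every nonzero finitely generated left or right R-module M, Kdim(R) = Kdim(M) + j_R(M); that is, R is Krull-Macaulay. -/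
universe u

open Filter in
/-- `DevLE n a b` : the deviation (in the sense of Gabriel–Rentschler) of the
interval `[a, b]` in a poset is at most `n`. -/
def DevLE {α : Type*} [Preorder α] : ℕ → α → α → Prop
  | 0, a, b => ∀ f : ℕ → α, Antitone f → (∀ i, a ≤ f i) → f 0 ≤ b →
      ∀ᶠ i in atTop, f (i + 1) = f i
  | n + 1, a, b => ∀ f : ℕ → α, Antitone f → (∀ i, a ≤ f i) → f 0 ≤ b →
      ∀ᶠ i in atTop, DevLE n (f (i + 1)) (f i)

/-- The Krull dimension (Gabriel–Rentschler deviation of the submodule lattice)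
of a module, valued in `ℕ∞`. -/
noncomputable def moduleKdim (R M : Type*) [Ring R] [AddCommGroup M] [Module R M] : ℕ∞ :=
  sInf {n : ℕ∞ | ∃ m : ℕ, n = m ∧ DevLE m (⊥ : Submodule R M) ⊤}

/-!
By the Eakin–Nagata theorem the centre `A` of `R` is noetherian, so it is enough to treat left
modules over a ring `S` that is module-finite over a commutative noetherian ring `A`, and to apply
the result to `R` and `Rᵐᵒᵖ`. Let `d` be the common value of `Kdim (S / P) + j_S(S / P)`.

*Vanishing.* If `Kdim M < n` and `n + i ≤ d`, then `Ext^i(M, S) = 0`. Filtering `M`, one may assume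
that `P = ann M` is prime. As `S / P` embeds into a power of `M`, it has the same Krull dimension,
so its `Ext^i` vanishes; and `M` is a quotient of a power of `S / P` whose kernel is handled by
induction on `i`.

*Nonvanishing.* Let `Kdim M = k` and `i = d - k`. Then `M` has a `k`-critical quotient `C`. If
`Ext^i(M, S) = 0`, vanishing gives `Ext^i(C, S) = 0`. Every nonzero submodule `L` of `C` contains
`aC ≅ C` for some `a ∈ A`, and `Kdim (L / aC) < k`, so `Ext^i(L, S) = 0` too. Since
`S / ann C` embeds into a power of `C`, it follows that `Ext^i(S / ann C, S) = 0`, which contradicts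
`j(S / ann C) = d - k`, the ideal `ann C` being prime.
-/

open Filter Set

section Deviation

/-- The deviation of the interval `[a, b]` is less than `n`, where a one-point interval has
deviation `-∞`. Compared with `DevLE` the index is shifted by one, so that inductions on it start
from one-point intervals. -/
def DevLT {α : Type*} [Preorder α] : ℕ → α → α → Prop
  | 0, a, b => a = b
  | n + 1, a, b => DevLE n a b

theorem devLT_succ_iff {α : Type*} [Preorder α] {n : ℕ} {a b : α} :
    DevLT (n + 1) a b ↔ ∀ f : ℕ → α, Antitone f → (∀ i, a ≤ f i) → f 0 ≤ b →
      ∀ᶠ i in atTop, DevLT n (f (i + 1)) (f i) := by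
  cases n <;> rfl

namespace DevLT

section PartialOrder

variable {α β : Type*} [PartialOrder α] [PartialOrder β] {n : ℕ} {a b : α}

theorem self (n : ℕ) (a : α) : DevLT n a a := by
  induction n with
  | zero => rfl
  | succ n ih =>
    refine devLT_succ_iff.2 fun f hf ha hb => Eventually.of_forall fun i => ?_
    have hfa : ∀ i, f i = a := fun i => ((hf i.zero_le).trans hb).antisymm (ha i)
    rwa [hfa, hfa]

theorem of_strictMonoOn {φ : α → β} (hab : a ≤ b) (hφ : StrictMonoOn φ (Icc a b))
    (h : DevLT n (φ a) (φ b)) : DevLT n a b := by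
  induction n generalizing a b with
  | zero =>
    refine hab.eq_of_not_lt fun hlt => ?_
    exact (hφ (left_mem_Icc.2 hab) (right_mem_Icc.2 hab) hlt).ne h
  | succ n ih =>
    refine devLT_succ_iff.2 fun f hf ha hb => ?_
    have hmem : ∀ i, f i ∈ Icc a b := fun i => ⟨ha i, (hf i.zero_le).trans hb⟩
    have hmono := hφ.monotoneOn
    filter_upwards [devLT_succ_iff.1 h (φ ∘ f) (fun i j hij => hmono (hmem j) (hmem i) (hf hij))
      (fun i => hmono (left_mem_Icc.2 hab) (hmem i) (ha i))
      (hmono (hmem 0) (right_mem_Icc.2 hab) hb)] with i hi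
    exact ih (hf i.le_succ) (hφ.mono (Icc_subset_Icc (ha _) (hmem i).2)) hi

theorem mono_Icc {a' b' : α} (h : DevLT n a b) (ha : a ≤ a') (hab : a' ≤ b') (hb : b' ≤ b) :
    DevLT n a' b' := by
  cases n with
  | zero => exact hab.antisymm (hb.trans (h.symm.le.trans ha))
  | succ n =>
    rw [devLT_succ_iff] at h ⊢
    exact fun f hf hf_ge hf_le => h f hf (fun i => ha.trans (hf_ge i)) (hf_le.trans hb)

theorem succ (h : DevLT n a b) : DevLT (n + 1) a b := by
  induction n generalizing a b with
  | zero => exact h ▸ self _ _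
  | succ n ih =>
    rw [devLT_succ_iff] at h ⊢
    exact fun f hf ha hb => (h f hf ha hb).mono fun i => ih

theorem mono {m : ℕ} (h : DevLT n a b) (hnm : n ≤ m) : DevLT m a b :=
  Nat.le_induction h (fun _ _ => succ) m hnm

end PartialOrder

variable {α : Type*} [Lattice α] [IsModularLattice α] {n : ℕ} {a b c : α}

theorem of_inf (hab : a ≤ b) (hbc : b ≤ a ⊔ c) (h : DevLT n (a ⊓ c) (b ⊓ c)) : DevLT n a b :=
  of_strictMonoOn (φ := (· ⊓ c)) hab (fun _ hx _ hy hxy => inf_lt_inf_of_lt_of_sup_le_sup hxy <|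
    sup_le (hy.2.trans (hbc.trans (sup_le_sup_right hx.1 c))) le_sup_right) h

theorem of_sup (hab : a ≤ b) (hbc : b ⊓ c ≤ a) (h : DevLT n (a ⊔ c) (b ⊔ c)) : DevLT n a b :=
  of_strictMonoOn (φ := (· ⊔ c)) hab (fun _ hx _ hy hxy => sup_lt_sup_of_lt_of_inf_le_inf hxy <|
    le_inf ((inf_le_inf_right c hy.2).trans (hbc.trans hx.1)) inf_le_right) h

/-- A chain in `[a, c]` is compared with its traces `f i ⊓ b` and `f i ⊔ b` on the two halves. -/
theorem trans (hab : a ≤ b) (hbc : b ≤ c) (h₁ : DevLT n a b) (h₂ : DevLT n b c) :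
    DevLT n a c := by
  induction n generalizing a b c with
  | zero => exact Eq.trans h₁ h₂
  | succ n ih =>
    refine devLT_succ_iff.2 fun f hf ha hc => ?_
    filter_upwards [devLT_succ_iff.1 h₁ (fun i => f i ⊓ b)
        (fun i j hij => inf_le_inf_right b (hf hij)) (fun i => le_inf (ha i) hab) inf_le_right,
      devLT_succ_iff.1 h₂ (fun i => f i ⊔ b)
        (fun i j hij => sup_le_sup_right (hf hij) b) (fun i => le_sup_right) (sup_le hc hbc)]
      with i h_inf h_sup
    have hle : f (i + 1) ≤ f i := hf i.le_succ
    have h_mid : f (i + 1) ⊔ f i ⊓ b ≤ f i := sup_le hle inf_le_left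
    refine ih (b := f (i + 1) ⊔ f i ⊓ b) le_sup_left h_mid (of_inf (c := b) le_sup_left
      (sup_le_sup_left inf_le_right _) (h_inf.mono_Icc le_rfl (inf_le_inf_right b le_sup_left)
        (inf_le_inf_right b h_mid))) (of_sup (c := b) h_mid le_sup_right ?_)
    rwa [sup_assoc, sup_eq_right.2 (inf_le_right : f i ⊓ b ≤ b)]

end DevLT

end Deviation

section KrullDimension

/-- The module `M` has Krull dimension less than `n`, where the zero module has dimension `-∞`
(whereas `moduleKdim` assigns `0` to it). -/
def KdimLT (n : ℕ) (R M : Type*) [Ring R] [AddCommGroup M] [Module R M] : Prop :=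
  DevLT n (⊥ : Submodule R M) ⊤

variable {R M N Q : Type*} [Ring R] [AddCommGroup M] [Module R M] [AddCommGroup N] [Module R N]
  [AddCommGroup Q] [Module R Q] {n : ℕ}

theorem kdimLT_zero_iff : KdimLT 0 R M ↔ Subsingleton M :=
  subsingleton_iff_bot_eq_top.trans (Submodule.subsingleton_iff R)

theorem kdimLT_of_subsingleton [Subsingleton M] : KdimLT n R M :=
  (kdimLT_zero_iff.2 ‹_› : KdimLT 0 R M).mono n.zero_le

theorem DevLT.kdimLT_quotient {X : Submodule R M} {Y : Submodule R X}
    (h : DevLT n (Y.map X.subtype) X) : KdimLT n R (X ⧸ Y) := by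
  refine DevLT.of_strictMonoOn (φ := fun Z => (Z.comap Y.mkQ).map X.subtype) bot_le
    (StrictMono.strictMonoOn ((Submodule.map_strictMono_of_injective X.injective_subtype).comp
      (Submodule.comap_strictMono_of_surjective Y.mkQ_surjective)) _) ?_
  simpa using h

namespace KdimLT

theorem of_injective (f : M →ₗ[R] N) (hf : Function.Injective f) (h : KdimLT n R N) :
    KdimLT n R M :=
  DevLT.of_strictMonoOn bot_le
    ((Submodule.map_strictMono_of_injective hf).strictMonoOn _)
    (h.mono_Icc bot_le (Submodule.map_mono bot_le) le_top)

theorem of_surjective (f : N →ₗ[R] M) (hf : Function.Surjective f) (h : KdimLT n R N) :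
    KdimLT n R M :=
  DevLT.of_strictMonoOn bot_le
    ((Submodule.comap_strictMono_of_surjective hf).strictMonoOn _)
    (h.mono_Icc bot_le (Submodule.comap_mono bot_le) le_top)

theorem of_restrictScalars {A : Type*} [Ring A] [Module A M] [SMul A R] [IsScalarTower A R M]
    (h : KdimLT n A M) : KdimLT n R M :=
  DevLT.of_strictMonoOn (φ := Submodule.restrictScalars A) bot_le (fun _ _ _ _ hlt => hlt)
    (h.mono_Icc bot_le bot_le le_top)

theorem devLT_bot_range (f : M →ₗ[R] N) (h : KdimLT n R M) : DevLT n ⊥ f.range :=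
  DevLT.of_strictMonoOn bot_le
    ((Submodule.gc_map_comap f).monotone_u.monotoneOn _ |>.strictMonoOn_of_injOn
      (LeftInvOn.injOn fun _ hX => Submodule.map_comap_eq_of_le hX.2))
    (h.mono_Icc bot_le (Submodule.comap_mono bot_le) le_top)

theorem devLT_ker_top (g : N →ₗ[R] Q) (h : KdimLT n R Q) : DevLT n g.ker ⊤ :=
  DevLT.of_strictMonoOn le_top
    ((Submodule.gc_map_comap g).monotone_l.monotoneOn _ |>.strictMonoOn_of_injOn
      (LeftInvOn.injOn fun _ hX => Submodule.comap_map_eq_self hX.1))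
    (h.mono_Icc bot_le (Submodule.map_mono le_top) le_top)

theorem of_exact {f : M →ₗ[R] N} {g : N →ₗ[R] Q} (hfg : Function.Exact f g)
    (hM : KdimLT n R M) (hQ : KdimLT n R Q) : KdimLT n R N :=
  DevLT.trans bot_le le_top (hM.devLT_bot_range f)
    (LinearMap.exact_iff.1 hfg ▸ hQ.devLT_ker_top g)

theorem pi (h : KdimLT n R M) (r : ℕ) : KdimLT n R (Fin r → M) := by
  induction r with
  | zero => exact kdimLT_of_subsingleton
  | succ r ih =>
    have h_prod : KdimLT n R (M × (Fin r → M)) :=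
      of_exact Function.Exact.inl_snd h ih
    exact h_prod.of_surjective (Fin.consLinearEquiv R fun _ => M).toLinearMap
      (Fin.consLinearEquiv R fun _ => M).surjective

end KdimLT

theorem moduleKdim_lt_natCast_iff [Nontrivial M] : moduleKdim R M < n ↔ KdimLT n R M := by
  refine sInf_lt_iff.trans ⟨?_, fun h => ?_⟩
  · rintro ⟨_, ⟨m, rfl, hm⟩, hmn⟩
    exact DevLT.mono (n := m + 1) hm (by exact_mod_cast hmn)
  · cases n with
    | zero => exact absurd (kdimLT_zero_iff.1 h) (not_subsingleton M)
    | succ n => exact ⟨n, ⟨n, rfl, h⟩, by exact_mod_cast n.lt_succ_self⟩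

theorem moduleKdim_eq_natCast (h : KdimLT (n + 1) R M) (h' : ¬ KdimLT n R M) :
    moduleKdim R M = n := by
  have : Nontrivial M := not_subsingleton_iff_nontrivial.1 fun _ => h' kdimLT_of_subsingleton
  refine le_antisymm (Order.le_of_lt_add_one ?_) (not_lt.1 (moduleKdim_lt_natCast_iff.not.2 h'))
  exact_mod_cast moduleKdim_lt_natCast_iff.2 h

end KrullDimension

section Support

variable {A S M N : Type*} [CommRing A] [Ring S] [Algebra A S]
  [AddCommGroup M] [Module A M] [Module S M] [IsScalarTower A S M]
  [AddCommGroup N] [Module A N] [Module S N] [IsScalarTower A S N] {n : ℕ}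

theorem lt_of_mem_support_quotient {p q : PrimeSpectrum A} {L : Submodule A (A ⧸ p.asIdeal)}
    (hL : L ≠ ⊥) (hq : q ∈ Module.support A ((A ⧸ p.asIdeal) ⧸ L)) : p < q := by
  have hpq : p ≤ q := by
    have hq' := Module.support_subset_of_surjective _ L.mkQ_surjective hq
    rwa [Module.mem_support_iff_of_finite, Ideal.annihilator_quotient] at hq'
  refine hpq.lt_of_ne fun hpq => hL (L.eq_bot_iff.2 fun x hx => ?_)
  obtain ⟨a, rfl⟩ := Ideal.Quotient.mk_surjective x
  rw [Module.mem_support_iff_of_finite, ← hpq] at hq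
  refine Ideal.Quotient.eq_zero_iff_mem.2 (hq (Module.mem_annihilator.2 fun m => ?_))
  obtain ⟨m, rfl⟩ := L.mkQ_surjective m
  obtain ⟨b, rfl⟩ := Ideal.Quotient.mk_surjective m
  rw [← map_smul, Submodule.mkQ_apply, Submodule.Quotient.mk_eq_zero, Algebra.smul_def, mul_comm]
  exact L.smul_mem b hx

theorem KdimLT.exists_quotient_range_smul (h : KdimLT (n + 1) S M) (a : A) :
    ∃ j : ℕ, KdimLT n S ((DistribSMul.toLinearMap S M (a ^ j)).range ⧸
      (DistribSMul.toLinearMap S (DistribSMul.toLinearMap S M (a ^ j)).range a).range) := by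
  let f (j : ℕ) : Submodule S M := (DistribSMul.toLinearMap S M (a ^ j)).range
  have hf_anti : Antitone f := antitone_nat_of_succ_le fun j => by
    rintro _ ⟨m, rfl⟩
    exact ⟨a • m, by simp [pow_succ, smul_smul, mul_comm]⟩
  obtain ⟨j, hj⟩ := (devLT_succ_iff.1 h f hf_anti (fun _ => bot_le) le_top).exists
  refine ⟨j, DevLT.kdimLT_quotient ?_⟩
  convert hj
  rw [← LinearMap.range_comp]
  ext x
  simp [f, pow_succ', mul_smul]

variable [Module.Finite A M] [Module.Finite A N]

theorem mem_support_quotient_range_smul {a : A} {q : PrimeSpectrum A}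
    (hq : q ∈ Module.support A M) (ha : a ∈ q.asIdeal) :
    q ∈ Module.support A (M ⧸ (DistribSMul.toLinearMap S M a).range) := by
  have h_range : (DistribSMul.toLinearMap S M a).range.restrictScalars A =
      Ideal.span {a} • (⊤ : Submodule A M) := by
    ext x
    simp [Submodule.ideal_span_singleton_smul, Submodule.mem_smul_pointwise_iff_exists]
  rw [← (Submodule.Quotient.restrictScalarsEquiv A _).support_eq, h_range, Module.support_quotient,
    PrimeSpectrum.zeroLocus_span]
  exact ⟨hq, by simpa using ha⟩

variable [IsNoetherianRing A]

theorem kdimLT_of_forall_mem_support {M : Type*} [AddCommGroup M] [Module A M]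
    [hM : Module.Finite A M] (h : ∀ p ∈ Module.support A M, KdimLT n A (A ⧸ p.asIdeal)) :
    KdimLT n A M := by
  induction hM using IsNoetherianRing.induction_on_isQuotientEquivQuotientPrime A with
  | subsingleton N => exact kdimLT_of_subsingleton
  | quotient N p e =>
    refine (h p ?_).of_injective e.toLinearMap e.injective
    rw [e.support_eq, Module.mem_support_iff_of_finite, Ideal.annihilator_quotient]
  | exact N₁ N₂ N₃ f g hf hg hfg h₁ h₃ =>
    rw [Module.support_of_exact hfg hf hg] at h
    exact .of_exact hfg (h₁ fun p hp => h p (.inl hp)) (h₃ fun p hp => h p (.inr hp))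

theorem kdimLT_succ_quotient_prime {p : PrimeSpectrum A}
    (h : ∀ q > p, KdimLT n A (A ⧸ q.asIdeal)) : KdimLT (n + 1) A (A ⧸ p.asIdeal) := by
  refine devLT_succ_iff.2 fun f hf _ _ => ?_
  by_cases hbot : ∃ i, f i = ⊥
  · obtain ⟨i, hi⟩ := hbot
    filter_upwards [eventually_ge_atTop i] with j hj
    have hf_bot : ∀ k ≥ i, f k = ⊥ := fun k hk => eq_bot_iff.2 (hi ▸ hf hk)
    rw [hf_bot j hj, hf_bot (j + 1) (hj.trans j.le_succ)]
    exact DevLT.self _ _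
  · push Not at hbot
    refine .of_forall fun i => ?_
    have h_quot : KdimLT n A ((A ⧸ p.asIdeal) ⧸ f (i + 1)) :=
      kdimLT_of_forall_mem_support fun q hq => h q (lt_of_mem_support_quotient (hbot _) hq)
    exact (h_quot.devLT_ker_top (f (i + 1)).mkQ).mono_Icc (Submodule.ker_mkQ _).le
      (hf i.le_succ) le_top

theorem KdimLT.quotient_of_mem_support {p : PrimeSpectrum A} (h : KdimLT n S M)
    (hp : p ∈ Module.support A M) : KdimLT n A (A ⧸ p.asIdeal) := by
  induction n generalizing M p with
  | zero =>
    have := kdimLT_zero_iff.1 h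
    simp [Module.support_eq_empty] at hp
  | succ n ih =>
    refine kdimLT_succ_quotient_prime fun q hpq => ?_
    obtain ⟨a, haq, hap⟩ := SetLike.exists_of_lt (PrimeSpectrum.asIdeal_lt_asIdeal _ _ |>.2 hpq)
    obtain ⟨j, hj⟩ := h.exists_quotient_range_smul a
    set X := (DistribSMul.toLinearMap S M (a ^ j)).range
    have : Module.Finite A X := .of_injective (X.subtype.restrictScalars A) X.injective_subtype
    have hpX : p ∈ Module.support A X := by
      rw [Module.mem_support_iff'] at hp ⊢
      obtain ⟨m, hm⟩ := hp
      refine ⟨⟨a ^ j • m, m, rfl⟩, fun r hr => ?_⟩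
      have := hm (r * a ^ j) (p.asIdeal.primeCompl.mul_mem hr (pow_mem hap j))
      simpa [mul_smul, Subtype.ext_iff] using this
    exact ih hj (mem_support_quotient_range_smul (Module.mem_support_mono hpq.le hpX) haq)

theorem KdimLT.of_support_subset (h : KdimLT n S M)
    (hNM : Module.support A N ⊆ Module.support A M) : KdimLT n S N :=
  (kdimLT_of_forall_mem_support fun _ hp =>
    h.quotient_of_mem_support (hNM hp)).of_restrictScalars (A := A)

end Support

section ExtVanishing

open CategoryTheory Abelian

attribute [local instance] HasDerivedCategory.standard hasExt_of_hasDerivedCategory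

variable {S : Type u} [Ring S] {K M N Q : Type u} [AddCommGroup K] [Module S K]
  [AddCommGroup M] [Module S M] [AddCommGroup N] [Module S N] [AddCommGroup Q] [Module S Q] {i : ℕ}

namespace ExtGroup

theorem subsingleton_of_subsingleton [Subsingleton M] : Subsingleton (ExtGroup S M N i) := by
  unfold ExtGroup
  refine subsingleton_of_forall_eq (0 : Ext _ _ i) fun x => ?_
  have h_id : 𝟙 (ModuleCat.of S M) = 0 := by
    ext m
    exact Subsingleton.elim (α := M) _ _
  rw [← Ext.mk₀_id_comp x, h_id, Ext.mk₀_zero, Ext.zero_comp]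

section ShortExact

variable {f : K →ₗ[S] M} {g : M →ₗ[S] Q}

theorem shortExact_ofHom (hf : Function.Injective f) (hg : Function.Surjective g)
    (hfg : Function.Exact f g) :
    (ShortComplex.mk (ModuleCat.ofHom f) (ModuleCat.ofHom g)
      (ModuleCat.hom_ext hfg.linearMap_comp_eq_zero)).ShortExact :=
  ModuleCat.shortComplex_shortExact _ hfg hf hg

theorem subsingleton_of_exact (hf : Function.Injective f) (hg : Function.Surjective g)
    (hfg : Function.Exact f g) (hK : Subsingleton (ExtGroup S K N i))
    (hQ : Subsingleton (ExtGroup S Q N i)) : Subsingleton (ExtGroup S M N i) := by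
  unfold ExtGroup at *
  refine subsingleton_of_forall_eq (0 : Ext _ _ i) fun x => ?_
  obtain ⟨y, rfl⟩ := Ext.contravariant_sequence_exact₂
    (shortExact_ofHom hf hg hfg) _ x (hK.elim _ _)
  rw [hQ.elim y (0 : Ext _ _ i), Ext.comp_zero]

theorem subsingleton_succ_of_exact (hf : Function.Injective f) (hg : Function.Surjective g)
    (hfg : Function.Exact f g) (hM : Subsingleton (ExtGroup S M N (i + 1)))
    (hK : Subsingleton (ExtGroup S K N i)) : Subsingleton (ExtGroup S Q N (i + 1)) := by
  unfold ExtGroup at *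
  refine subsingleton_of_forall_eq (0 : Ext _ _ (i + 1)) fun x => ?_
  obtain ⟨y, rfl⟩ := Ext.contravariant_sequence_exact₃
    (shortExact_ofHom hf hg hfg) _ x (hM.elim _ _) (add_comm 1 i)
  rw [hK.elim y (0 : Ext _ _ i), Ext.comp_zero]

theorem subsingleton_zero_of_surjective (hg : Function.Surjective g)
    (hM : Subsingleton (ExtGroup S M N 0)) : Subsingleton (ExtGroup S Q N 0) := by
  unfold ExtGroup at *
  have : Epi (ModuleCat.ofHom g) := (ModuleCat.epi_iff_surjective _).2 hg
  exact (Ext.precomp_mk₀_injective_of_epi.{u + 1} (ModuleCat.of S N)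
    (ModuleCat.ofHom g)).subsingleton

end ShortExact

theorem subsingleton_of_surjective (g : M →ₗ[S] Q) (hg : Function.Surjective g)
    (hM : Subsingleton (ExtGroup S M N i)) (hK : ∀ j < i, Subsingleton (ExtGroup S g.ker N j)) :
    Subsingleton (ExtGroup S Q N i) := by
  cases i with
  | zero => exact subsingleton_zero_of_surjective hg hM
  | succ i =>
    exact subsingleton_succ_of_exact g.ker.injective_subtype hg g.exact_subtype_ker_map hM
      (hK i i.lt_succ_self)

theorem subsingleton_of_submodule (L : Submodule S M) (hL : Subsingleton (ExtGroup S L N i))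
    (hQ : Subsingleton (ExtGroup S (M ⧸ L) N i)) : Subsingleton (ExtGroup S M N i) :=
  subsingleton_of_exact L.injective_subtype L.mkQ_surjective (LinearMap.exact_subtype_mkQ L) hL hQ

theorem subsingleton_of_linearEquiv (e : M ≃ₗ[S] Q) (h : Subsingleton (ExtGroup S M N i)) :
    Subsingleton (ExtGroup S Q N i) :=
  subsingleton_of_exact (Q := PUnit.{u + 1}) (g := 0) e.injective
    (Function.surjective_to_subsingleton _) ((e.exact_zero_iff_surjective _).2 e.surjective) h
    subsingleton_of_subsingleton

theorem subsingleton_pi (h : Subsingleton (ExtGroup S M N i)) (r : ℕ) :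
    Subsingleton (ExtGroup S (Fin r → M) N i) := by
  induction r with
  | zero => exact subsingleton_of_subsingleton
  | succ r ih =>
    have h_prod : Subsingleton (ExtGroup S (M × (Fin r → M)) N i) :=
      subsingleton_of_exact LinearMap.inl_injective LinearMap.snd_surjective
        Function.Exact.inl_snd h ih
    exact subsingleton_of_linearEquiv (Fin.consLinearEquiv S fun _ => M) h_prod

theorem subsingleton_of_injective_pi (h : ∀ L : Submodule S M, Subsingleton (ExtGroup S L N i))
    {r : ℕ} (f : Q →ₗ[S] Fin r → M) (hf : Function.Injective f) :
    Subsingleton (ExtGroup S Q N i) := by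
  induction r generalizing Q with
  | zero =>
    have := hf.subsingleton
    exact subsingleton_of_subsingleton
  | succ r ih =>
    let head : Q →ₗ[S] M := LinearMap.proj 0 ∘ₗ f
    let tail : head.ker →ₗ[S] Fin r → M := LinearMap.funLeft S M Fin.succ ∘ₗ f ∘ₗ head.ker.subtype
    refine subsingleton_of_submodule head.ker (ih tail fun x y hxy => ?_)
      (subsingleton_of_linearEquiv head.quotKerEquivRange.symm (h _))
    refine Subtype.ext (hf (funext (Fin.cases ?_ (congrFun hxy))))
    exact x.2.trans y.2.symm

end ExtGroup

theorem homGrade_le (h : ¬ Subsingleton (ExtGroup S M S i)) : homGrade S M ≤ i :=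
  sInf_le ⟨i, rfl, h⟩

theorem subsingleton_extGroup_of_lt_homGrade (h : i < homGrade S M) :
    Subsingleton (ExtGroup S M S i) :=
  not_not.1 fun hi => h.not_ge (homGrade_le hi)

theorem not_subsingleton_extGroup_of_homGrade_eq (h : homGrade S M = i) :
    ¬ Subsingleton (ExtGroup S M S i) := by
  have h_mem : homGrade S M ∈ {n : ℕ∞ | ∃ i : ℕ, n = i ∧ ¬ Subsingleton (ExtGroup S M S i)} := by
    refine csInf_mem (nonempty_iff_ne_empty.2 fun h_empty => ?_)
    rw [homGrade, h_empty, sInf_empty] at h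
    exact ENat.natCast_ne_top i h.symm
  obtain ⟨j, hj, hne⟩ := h_mem
  rwa [← ENat.natCast_inj.1 (h.symm.trans hj)] at hne

end ExtVanishing

section PrimeAnnihilator

variable {S M : Type*} [Ring S] [AddCommGroup M] [Module S M]

theorem nontrivial_quotient_of_isPrimeTS {I : Ideal S} [I.IsTwoSided]
    (hI : IsPrimeTS I.toTwoSided) : Nontrivial (S ⧸ I) :=
  Submodule.Quotient.nontrivial_iff.2 fun h_top => hI.1 (by ext; simp [h_top])

theorem isPrimeTS_annihilator [Nontrivial M]
    (h : ∀ L : Submodule S M, L ≠ ⊥ → Module.annihilator S L ≤ Module.annihilator S M) :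
    IsPrimeTS (Module.annihilator S M).toTwoSided := by
  refine ⟨fun h_top => ?_, fun a b hab => ?_⟩
  · have h_one : (1 : S) ∈ (Module.annihilator S M).toTwoSided := h_top ▸ trivial
    obtain ⟨m, hm⟩ := exists_ne (0 : M)
    exact hm (by simpa using Module.mem_annihilator.1 (Ideal.mem_toTwoSided.1 h_one) m)
  · simp only [Ideal.mem_toTwoSided] at hab ⊢
    let L : Submodule S M := .span S (range fun m : M => b • m)
    by_cases hL : L = ⊥
    · refine .inr (Module.mem_annihilator.2 fun m => ?_)
      exact (Submodule.eq_bot_iff _).1 hL _ (Submodule.subset_span ⟨m, rfl⟩)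
    · refine .inl (h L hL (Submodule.mem_annihilator.2 fun x hx => ?_))
      induction hx using Submodule.closure_induction with
      | zero => exact smul_zero a
      | add x y _ _ hx hy => rw [smul_add, hx, hy, add_zero]
      | smul_mem r _ hx =>
        obtain ⟨m, rfl⟩ := hx
        simpa [mul_smul] using Module.mem_annihilator.1 (hab r) m

theorem exists_submodule_isPrimeTS_annihilator [IsNoetherianRing S] [Nontrivial M] :
    ∃ L : Submodule S M, L ≠ ⊥ ∧ IsPrimeTS (Module.annihilator S L).toTwoSided := by
  obtain ⟨L, hL, hmax⟩ := (InvImage.wf (fun L : Submodule S M => L.annihilator)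
    (wellFounded_gt (α := Ideal S))).has_min {L | L ≠ ⊥} ⟨⊤, top_ne_bot⟩
  have := Submodule.nontrivial_iff_ne_bot.2 hL
  refine ⟨L, hL, isPrimeTS_annihilator fun L' hL' => ?_⟩
  have h_map : L'.map L.subtype ≠ ⊥ :=
    ((Submodule.map_injective_of_injective L.injective_subtype).ne_iff' (Submodule.map_bot _)).2 hL'
  have h_ann : L.annihilator = (L'.map L.subtype).annihilator :=
    (Submodule.annihilator_mono (Submodule.map_subtype_le L L')).eq_of_not_lt (hmax _ h_map)
  exact ((L'.equivMapOfInjective _ L.injective_subtype).annihilator_eq.trans h_ann.symm).le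

end PrimeAnnihilator

theorem induction_on_isPrimeTS_annihilator {S : Type*} [Ring S] [IsNoetherianRing S]
    {motive : (M : Type u) → [AddCommGroup M] → [Module S M] → Prop}
    (subsingleton : ∀ (M : Type u) [AddCommGroup M] [Module S M] [Subsingleton M], motive M)
    (prime : ∀ (M : Type u) [AddCommGroup M] [Module S M] [Module.Finite S M],
      IsPrimeTS (Module.annihilator S M).toTwoSided → motive M)
    (extension : ∀ (M : Type u) [AddCommGroup M] [Module S M] (L : Submodule S M),
      motive L → motive (M ⧸ L) → motive M)
    (M : Type u) [AddCommGroup M] [Module S M] [Module.Finite S M] : motive M := by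
  suffices h : ∀ (K : Submodule S M) (Q : Type u) [AddCommGroup Q] [Module S Q] (f : M →ₗ[S] Q),
      Function.Surjective f → f.ker = K → motive Q from
    h ⊥ M .id Function.surjective_id LinearMap.ker_id
  intro K
  induction K using WellFoundedGT.induction with
  | ind K ih =>
    intro Q _ _ f hf hK
    cases subsingleton_or_nontrivial Q with
    | inl _ => exact subsingleton Q
    | inr _ =>
      have : Module.Finite S Q := .of_surjective f hf
      obtain ⟨L, hL, hL_prime⟩ := exists_submodule_isPrimeTS_annihilator (S := S) (M := Q)
      refine extension Q L (prime L hL_prime)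
        (ih _ ?_ (Q ⧸ L) (L.mkQ ∘ₗ f) (L.mkQ_surjective.comp hf) rfl)
      rw [LinearMap.ker_comp, Submodule.ker_mkQ, ← hK, ← Submodule.comap_bot]
      exact Submodule.comap_strictMono_of_surjective hf (bot_lt_iff_ne_bot.2 hL)

section QuotientAnnihilator

variable (S C : Type*) [Ring S] [AddCommGroup C] [Module S C] [Module.Finite S C]

theorem exists_surjective_pi_quotient_annihilator :
    ∃ (r : ℕ) (f : (Fin r → S ⧸ Module.annihilator S C) →ₗ[S] C), Function.Surjective f := by
  obtain ⟨r, s, hs⟩ := Module.Finite.exists_fin (R := S) (M := C)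
  let g (i : Fin r) : (S ⧸ Module.annihilator S C) →ₗ[S] C :=
    (Module.annihilator S C).liftQ (LinearMap.toSpanSingleton S C (s i))
      fun x hx => Module.mem_annihilator.1 hx _
  refine ⟨r, LinearMap.lsum S _ ℕ g, ?_⟩
  rw [← LinearMap.range_eq_top, eq_top_iff, ← hs, Submodule.span_le]
  rintro _ ⟨i, rfl⟩
  refine ⟨Pi.single i (Submodule.Quotient.mk 1), ?_⟩
  rw [LinearMap.lsum_piSingle]
  exact one_smul S (s i)

theorem exists_injective_quotient_annihilator_pi (A : Type*) [CommRing A] [Algebra A S]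
    [Module.Finite A S] :
    ∃ (r : ℕ) (f : (S ⧸ Module.annihilator S C) →ₗ[S] Fin r → C), Function.Injective f := by
  let : Module A C := .compHom C (algebraMap A S)
  have : IsScalarTower A S C := .of_compHom A S C
  have : Module.Finite A C := .trans S C
  obtain ⟨r, s, hs⟩ := Module.Finite.exists_fin (R := A) (M := C)
  let g : S →ₗ[S] Fin r → C := LinearMap.pi fun i => LinearMap.toSpanSingleton S C (s i)
  have hg : g.ker = Module.annihilator S C := by
    refine le_antisymm (fun x hx => Module.mem_annihilator.2 fun c => ?_)
      fun x hx => funext fun i => Module.mem_annihilator.1 hx _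
    have h_eq : DistribSMul.toLinearMap A C x = 0 :=
      LinearMap.ext_on_range hs (congrFun hx)
    exact LinearMap.congr_fun h_eq c
  exact ⟨r, (Module.annihilator S C).liftQ g hg.ge,
    LinearMap.ker_eq_bot.1 (Submodule.ker_liftQ_eq_bot' _ _ hg.symm)⟩

variable {S C} in
theorem kdimLT_quotient_annihilator_iff (A : Type*) [CommRing A] [Algebra A S]
    [Module.Finite A S] {n : ℕ} :
    KdimLT n S (S ⧸ Module.annihilator S C) ↔ KdimLT n S C := by
  obtain ⟨r, f, hf⟩ := exists_surjective_pi_quotient_annihilator S C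
  obtain ⟨s, g, hg⟩ := exists_injective_quotient_annihilator_pi S C A
  exact ⟨fun h => (h.pi r).of_surjective f hf, fun h => (h.pi s).of_injective g hg⟩

end QuotientAnnihilator

section Critical

/-- The module `C` is `k`-critical in the sense of Gordon–Robson: it has Krull dimension at least
`k`, and all its proper quotients have Krull dimension less than `k`. -/
def IsCritical (k : ℕ) (S C : Type*) [Ring S] [AddCommGroup C] [Module S C] : Prop :=
  ¬ KdimLT k S C ∧ ∀ L : Submodule S C, L ≠ ⊥ → KdimLT k S (C ⧸ L)

theorem exists_isCritical_quotient {S M : Type*} [Ring S] [AddCommGroup M] [Module S M]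
    [IsNoetherian S M] {k : ℕ} (h : ¬ KdimLT k S M) :
    ∃ K : Submodule S M, IsCritical k S (M ⧸ K) := by
  have h_bot : ¬ KdimLT k S (M ⧸ (⊥ : Submodule S M)) := fun h' =>
    h (h'.of_injective (Submodule.mkQ ⊥) (LinearMap.ker_eq_bot.1 (Submodule.ker_mkQ ⊥)))
  obtain ⟨K, hK, hmax⟩ := (wellFounded_gt (α := Submodule S M)).has_min
    {K | ¬ KdimLT k S (M ⧸ K)} ⟨⊥, h_bot⟩
  refine ⟨K, hK, fun L hL => ?_⟩
  have h_lt : K < L.comap K.mkQ := by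
    simpa using Submodule.comap_strictMono_of_surjective K.mkQ_surjective (bot_lt_iff_ne_bot.2 hL)
  have h_quot : KdimLT k S (M ⧸ L.comap K.mkQ) := not_not.1 fun h' => hmax _ h' h_lt
  exact h_quot.of_surjective (Submodule.mapQ _ _ K.mkQ le_rfl)
    (.of_comp (g := (L.comap K.mkQ).mkQ) (L.mkQ_surjective.comp K.mkQ_surjective))

namespace IsCritical

section Endomorphism

variable {S C : Type*} [Ring S] [AddCommGroup C] [Module S C] {k : ℕ}

theorem nontrivial (hC : IsCritical k S C) : Nontrivial C :=
  not_subsingleton_iff_nontrivial.1 fun _ => hC.1 kdimLT_of_subsingleton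

theorem injective_of_ne_zero (hC : IsCritical k S C) {f : C →ₗ[S] C} (hf : f ≠ 0) :
    Function.Injective f := by
  by_contra h_inj
  have h_range : KdimLT k S f.range :=
    (hC.2 f.ker (LinearMap.ker_eq_bot.not.2 h_inj)).of_surjective
      f.quotKerEquivRange.toLinearMap f.quotKerEquivRange.surjective
  exact hC.1 (.of_exact (LinearMap.exact_subtype_mkQ f.range) h_range
    (hC.2 f.range (LinearMap.range_eq_bot.not.2 hf)))

variable [Module.Finite S C] (A : Type*) [CommRing A] [IsNoetherianRing A] [Algebra A S]
  [Module.Finite A S]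

include A

theorem exists_injective_range_le (hC : IsCritical k S C) {L : Submodule S C} (hL : L ≠ ⊥) :
    ∃ f : C →ₗ[S] C, Function.Injective f ∧ f.range ≤ L := by
  let : Module A C := .compHom C (algebraMap A S)
  have : IsScalarTower A S C := .of_compHom A S C
  have : Module.Finite A C := .trans S C
  obtain ⟨a, haL, haC⟩ : ∃ a ∈ Module.annihilator A (C ⧸ L), a ∉ Module.annihilator A C := by
    by_contra! h_le
    refine hC.1 ((hC.2 L hL).of_support_subset (A := A) ?_)
    rw [Module.support_eq_zeroLocus, Module.support_eq_zeroLocus]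
    exact PrimeSpectrum.zeroLocus_anti_mono h_le
  refine ⟨DistribSMul.toLinearMap S C a, hC.injective_of_ne_zero fun h_zero => ?_, ?_⟩
  · exact haC (Module.mem_annihilator.2 (LinearMap.congr_fun h_zero))
  · rintro _ ⟨c, rfl⟩
    exact (Submodule.Quotient.mk_eq_zero L).1 (Module.mem_annihilator.1 haL (L.mkQ c))

theorem isPrimeTS_annihilator (hC : IsCritical k S C) :
    IsPrimeTS (Module.annihilator S C).toTwoSided := by
  have := hC.nontrivial
  refine _root_.isPrimeTS_annihilator fun L hL x hx => Module.mem_annihilator.2 fun c => ?_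
  obtain ⟨f, hf, hfL⟩ := hC.exists_injective_range_le A hL
  apply hf
  rw [map_smul, map_zero]
  exact Submodule.mem_annihilator.1 hx _ (hfL ⟨c, rfl⟩)

end Endomorphism

variable {S C N : Type u} [Ring S] [AddCommGroup C] [Module S C] [Module.Finite S C]
  [AddCommGroup N] [Module S N] {k i : ℕ} (A : Type*) [CommRing A] [IsNoetherianRing A]
  [Algebra A S] [Module.Finite A S]

include A

theorem subsingleton_extGroup_submodule (hC : IsCritical k S C)
    (h_lt : ∀ (T : Type u) [AddCommGroup T] [Module S T] [Module.Finite S T],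
      KdimLT k S T → Subsingleton (ExtGroup S T N i))
    (h : Subsingleton (ExtGroup S C N i)) (L : Submodule S C) :
    Subsingleton (ExtGroup S L N i) := by
  by_cases hL : L = ⊥
  · subst hL
    exact ExtGroup.subsingleton_of_subsingleton
  obtain ⟨f, hf, hfL⟩ := hC.exists_injective_range_le A hL
  let f' : C →ₗ[S] L := f.codRestrict L fun c => hfL ⟨c, rfl⟩
  have hf' : Function.Injective f' := fun x y hxy => hf (congrArg Subtype.val hxy)
  have h_quot : KdimLT k S (L ⧸ f'.range) := by
    have h_range : f'.range.map L.subtype = f.range := by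
      rw [← LinearMap.range_comp, LinearMap.subtype_comp_codRestrict]
    have h_ne : f.range ≠ ⊥ := by
      have := hC.nontrivial
      obtain ⟨c, hc⟩ := exists_ne (0 : C)
      exact (Submodule.ne_bot_iff _).2 ⟨f c, ⟨c, rfl⟩, (map_ne_zero_iff f hf).2 hc⟩
    have h_top := (hC.2 f.range h_ne).devLT_ker_top f.range.mkQ
    rw [Submodule.ker_mkQ] at h_top
    exact DevLT.kdimLT_quotient (h_range ▸ h_top.mono_Icc le_rfl hfL le_top)
  have : IsNoetherianRing S := .of_finite A S
  exact ExtGroup.subsingleton_of_submodule f'.range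
    (ExtGroup.subsingleton_of_linearEquiv (LinearEquiv.ofInjective f' hf') h) (h_lt _ h_quot)

theorem subsingleton_extGroup_quotient_annihilator (hC : IsCritical k S C)
    (h_lt : ∀ (T : Type u) [AddCommGroup T] [Module S T] [Module.Finite S T],
      KdimLT k S T → Subsingleton (ExtGroup S T N i))
    (h : Subsingleton (ExtGroup S C N i)) :
    Subsingleton (ExtGroup S (S ⧸ Module.annihilator S C) N i) := by
  obtain ⟨r, f, hf⟩ := exists_injective_quotient_annihilator_pi S C A
  exact ExtGroup.subsingleton_of_injective_pi (hC.subsingleton_extGroup_submodule A h_lt h) f hf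

end IsCritical

end Critical

section Grade

/-- The grade equality `d = Kdim (S / P) + j_S(S / P)` at every prime ideal `P` of `S`, for the
left `S`-modules `S / P`. -/
def PrimeGradeCondition (S : Type u) [Ring S] (d : ℕ∞) : Prop :=
  ∀ P : TwoSidedIdeal S, IsPrimeTS P →
    d = moduleKdim S (S ⧸ TwoSidedIdeal.asIdeal P) + homGrade S (S ⧸ TwoSidedIdeal.asIdeal P)

namespace PrimeGradeCondition

section Quotient

variable {S : Type u} [Ring S] {d : ℕ∞} {I : Ideal S} [I.IsTwoSided]

theorem eq_quotient (H : PrimeGradeCondition S d) (hI : IsPrimeTS I.toTwoSided) :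
    d = moduleKdim S (S ⧸ I) + homGrade S (S ⧸ I) := by
  have h := H _ hI
  rwa [Ideal.asIdeal_toTwoSided] at h

theorem subsingleton_extGroup_quotient (H : PrimeGradeCondition S d) (hI : IsPrimeTS I.toTwoSided)
    {n i : ℕ} (hd : (n + i : ℕ∞) ≤ d) (hn : KdimLT n S (S ⧸ I)) :
    Subsingleton (ExtGroup S (S ⧸ I) S i) := by
  have := nontrivial_quotient_of_isPrimeTS hI
  refine subsingleton_extGroup_of_lt_homGrade (lt_of_not_ge fun h_le => hd.not_gt ?_)
  calc d = moduleKdim S (S ⧸ I) + homGrade S (S ⧸ I) := H.eq_quotient hI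
    _ ≤ moduleKdim S (S ⧸ I) + i := by gcongr
    _ < n + i := (ENat.add_lt_add_iff_right (ENat.natCast_ne_top i)).2
      (moduleKdim_lt_natCast_iff.2 hn)

end Quotient

variable {S : Type u} [Ring S] {d : ℕ∞} (A : Type*) [CommRing A] [IsNoetherianRing A]
  [Algebra A S] [Module.Finite A S]

include A

theorem subsingleton_extGroup (H : PrimeGradeCondition S d) {n i : ℕ} (hd : (n + i : ℕ∞) ≤ d)
    (M : Type u) [AddCommGroup M] [Module S M] [Module.Finite S M] (hM : KdimLT n S M) :
    Subsingleton (ExtGroup S M S i) := by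
  have : IsNoetherianRing S := .of_finite A S
  induction i using Nat.strong_induction_on generalizing M with
  | h i ih =>
    revert hM
    refine induction_on_isPrimeTS_annihilator (S := S)
      (motive := fun M => KdimLT n S M → Subsingleton (ExtGroup S M S i)) ?_ ?_ ?_ M
    · exact fun _ _ _ _ _ => ExtGroup.subsingleton_of_subsingleton
    · intro N _ _ _ h_prime hN
      have h_quot : KdimLT n S (S ⧸ Module.annihilator S N) :=
        (kdimLT_quotient_annihilator_iff A).2 hN
      obtain ⟨r, f, hf⟩ := exists_surjective_pi_quotient_annihilator S N
      refine ExtGroup.subsingleton_of_surjective f hf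
        (ExtGroup.subsingleton_pi (H.subsingleton_extGroup_quotient h_prime hd h_quot) r)
        fun j hj => ih j hj (hd.trans' (by gcongr)) f.ker ?_
      exact (h_quot.pi r).of_injective f.ker.subtype f.ker.injective_subtype
    · intro N _ _ L hL h_quot hN
      exact ExtGroup.subsingleton_of_submodule L
        (hL (hN.of_injective L.subtype L.injective_subtype))
        (h_quot (hN.of_surjective L.mkQ L.mkQ_surjective))

theorem kdimLT_succ {k : ℕ} (H : PrimeGradeCondition S k)
    (M : Type u) [AddCommGroup M] [Module S M] [Module.Finite S M] : KdimLT (k + 1) S M := by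
  have : IsNoetherianRing S := .of_finite A S
  refine induction_on_isPrimeTS_annihilator (S := S) (motive := fun M => KdimLT (k + 1) S M)
    (fun _ _ _ _ => kdimLT_of_subsingleton) (fun N _ _ _ h_prime => ?_)
    (fun N _ _ L hL h_quot => .of_exact (LinearMap.exact_subtype_mkQ L) hL h_quot) M
  have := nontrivial_quotient_of_isPrimeTS h_prime
  rw [← kdimLT_quotient_annihilator_iff A, ← moduleKdim_lt_natCast_iff, Nat.cast_add_one]
  exact ENat.lt_add_one_iff (ENat.natCast_ne_top k) |>.2
    (le_self_add.trans_eq (H.eq_quotient h_prime).symm)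

theorem not_subsingleton_extGroup {k i : ℕ} (H : PrimeGradeCondition S (k + i))
    (M : Type u) [AddCommGroup M] [Module S M] [Module.Finite S M] (hM : KdimLT (k + 1) S M)
    (hM' : ¬ KdimLT k S M) : ¬ Subsingleton (ExtGroup S M S i) := by
  intro h_ext
  have : IsNoetherianRing S := .of_finite A S
  obtain ⟨K, hK⟩ := exists_isCritical_quotient hM'
  have h_ext_critical : Subsingleton (ExtGroup S (M ⧸ K) S i) := by
    refine ExtGroup.subsingleton_of_surjective K.mkQ K.mkQ_surjective h_ext fun j hj => ?_
    refine H.subsingleton_extGroup A (n := k + 1) ?_ _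
      (hM.of_injective K.mkQ.ker.subtype K.mkQ.ker.injective_subtype)
    exact_mod_cast (by lia : k + 1 + j ≤ k + i)
  have h_ext_quot : Subsingleton (ExtGroup S (S ⧸ Module.annihilator S (M ⧸ K)) S i) :=
    hK.subsingleton_extGroup_quotient_annihilator A
      (fun T _ _ _ hT => H.subsingleton_extGroup A le_rfl T hT) h_ext_critical
  have h_kdim : moduleKdim S (S ⧸ Module.annihilator S (M ⧸ K)) = k :=
    moduleKdim_eq_natCast
      ((kdimLT_quotient_annihilator_iff A).2 (hM.of_surjective K.mkQ K.mkQ_surjective))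
      ((kdimLT_quotient_annihilator_iff A).not.2 hK.1)
  have h_grade := H.eq_quotient (hK.isPrimeTS_annihilator A)
  rw [h_kdim] at h_grade
  exact not_subsingleton_extGroup_of_homGrade_eq
    (WithTop.add_left_cancel (ENat.natCast_ne_top k) h_grade.symm) h_ext_quot

variable (M : Type u) [AddCommGroup M] [Module S M] [Module.Finite S M] [Nontrivial M]

theorem moduleKdim_le (H : PrimeGradeCondition S d) : moduleKdim S M ≤ d := by
  cases d with
  | top => exact le_top
  | coe m =>
    exact Order.le_of_lt_add_one (by exact_mod_cast moduleKdim_lt_natCast_iff.2 (H.kdimLT_succ A M))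

theorem eq_moduleKdim_add_homGrade (H : PrimeGradeCondition S d) :
    d = moduleKdim S M + homGrade S M := by
  have h_kdim_le : moduleKdim S M ≤ d := H.moduleKdim_le A M
  cases hk : moduleKdim S M with
  | top => rw [top_add, ← top_le_iff, ← hk]; exact h_kdim_le
  | coe k =>
    rw [hk] at h_kdim_le
    have hM : KdimLT (k + 1) S M :=
      moduleKdim_lt_natCast_iff.1 (hk ▸ by exact_mod_cast k.lt_succ_self)
    have hM' : ¬ KdimLT k S M := fun h => (moduleKdim_lt_natCast_iff.2 h).ne hk
    apply le_antisymm
    · cases hi : homGrade S M with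
      | top => simp
      | coe i =>
        refine not_lt.1 fun h_lt => not_subsingleton_extGroup_of_homGrade_eq hi
          (H.subsingleton_extGroup A (n := k + 1) ?_ M hM)
        simpa only [Nat.cast_add_one, add_right_comm] using Order.add_one_le_of_lt h_lt
    · obtain ⟨j, rfl⟩ := exists_add_of_le h_kdim_le
      cases j with
      | top => simp
      | coe i =>
        gcongr
        exact homGrade_le (H.not_subsingleton_extGroup A M hM hM')

end PrimeGradeCondition

end Grade

section EakinNagata

variable {A B : Type*} [CommRing A] [AddCommGroup B] [Module A B]

theorem mem_annihilator_quotient_iff_range_le {N : Submodule A B} {a : A} :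
    a ∈ Module.annihilator A (B ⧸ N) ↔ (LinearMap.lsmul A B a).range ≤ N := by
  rw [Module.mem_annihilator, N.mkQ_surjective.forall, LinearMap.range_le_iff_comap, eq_top_iff]
  exact forall_congr' fun b => by simp [← Submodule.Quotient.mk_smul]

variable [Module.Finite A B]

theorem isNoetherian_of_annihilator_le {C : Type*} [AddCommGroup C] [Module A C]
    [IsNoetherian A C] (h : Module.annihilator A C ≤ Module.annihilator A B) :
    IsNoetherian A B := by
  obtain ⟨s, g, hg⟩ := exists_injective_quotient_annihilator_pi A C A
  have : IsNoetherian A (A ⧸ Module.annihilator A C) := isNoetherian_of_injective g hg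
  have : IsNoetherian A (A ⧸ Module.annihilator A B) :=
    isNoetherian_of_surjective (Submodule.factor h)
      (LinearMap.range_eq_top.2 (Submodule.factor_surjective h))
  obtain ⟨r, f, hf⟩ := exists_surjective_pi_quotient_annihilator A B
  exact isNoetherian_of_surjective f (LinearMap.range_eq_top.2 hf)

theorem exists_maximal_annihilator_quotient_le :
    ∃ N : Submodule A B,
      Maximal (fun N => Module.annihilator A (B ⧸ N) ≤ Module.annihilator A B) N := by
  refine (zorn_le_nonempty₀ {N | Module.annihilator A (B ⧸ N) ≤ Module.annihilator A B}
    (fun c hc h_chain N hN => ⟨sSup c, fun a ha => ?_, fun _ => le_sSup⟩) ⊥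
    (Submodule.quotEquivOfEqBot ⊥ rfl).annihilator_eq.le).imp fun _ h => h.2
  have h_compact : IsCompactElement (LinearMap.lsmul A B a).range :=
    (Submodule.fg_iff_compact _).1 (Module.Finite.iff_fg.1 inferInstance)
  obtain ⟨N', hN', h_range⟩ := h_compact c (sSup c) ⟨N, hN⟩ h_chain.directedOn (isLUB_sSup c)
    (mem_annihilator_quotient_iff_range_le.1 ha)
  exact hc hN' (mem_annihilator_quotient_iff_range_le.2 h_range)

theorem isNoetherian_of_isNoetherian_quotient_range_lsmul
    (h : ∀ a ∉ Module.annihilator A B, IsNoetherian A (B ⧸ (LinearMap.lsmul A B a).range)) :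
    IsNoetherian A B := by
  obtain ⟨N, hN⟩ := exists_maximal_annihilator_quotient_le (A := A) (B := B)
  suffices IsNoetherian A (B ⧸ N) from isNoetherian_of_annihilator_le hN.prop
  refine ⟨fun L => ?_⟩
  by_cases hL : L = ⊥
  · exact hL ▸ Submodule.fg_bot
  have h_lt : N < L.comap N.mkQ := by
    simpa using Submodule.comap_strictMono_of_surjective N.mkQ_surjective (bot_lt_iff_ne_bot.2 hL)
  obtain ⟨a, haL, haB⟩ := Set.not_subset.1 (hN.not_prop_of_gt h_lt)
  have := h a haB
  rw [← Submodule.map_comap_eq_of_surjective N.mkQ_surjective L]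
  refine .map _ (Submodule.fg_of_fg_map_of_fg_inf_ker (LinearMap.lsmul A B a).range.mkQ
    (IsNoetherian.noetherian _) ?_)
  rw [Submodule.ker_mkQ, inf_eq_right.2 (mem_annihilator_quotient_iff_range_le.1 haL)]
  exact Module.Finite.iff_fg.1 inferInstance

theorem isNoetherian_of_wellFounded_smul_top
    (h : WellFounded (InvImage (· > ·) fun I : Ideal A => I • (⊤ : Submodule A B))) :
    IsNoetherian A B := by
  suffices h_quot : ∀ I : Ideal A, IsNoetherian A (B ⧸ I • (⊤ : Submodule A B)) by
    have := h_quot ⊥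
    exact isNoetherian_of_linearEquiv
      (Submodule.quotEquivOfEqBot ((⊥ : Ideal A) • (⊤ : Submodule A B)) (Submodule.bot_smul ⊤))
  intro I
  induction I using h.induction with
  | h I ih =>
    refine isNoetherian_of_isNoetherian_quotient_range_lsmul fun a ha => ?_
    rw [mem_annihilator_quotient_iff_range_le, LinearMap.range_eq_map] at ha
    have : IsNoetherian A (B ⧸ (I ⊔ Ideal.span {a}) • (⊤ : Submodule A B)) := by
      refine ih _ (?_ : I • (⊤ : Submodule A B) < _ • (⊤ : Submodule A B))
      rw [Submodule.sup_smul, Submodule.ideal_span_singleton_smul]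
      exact left_lt_sup.2 ha
    have h_le : (I ⊔ Ideal.span {a}) • (⊤ : Submodule A B) ≤
        (LinearMap.lsmul A (B ⧸ I • (⊤ : Submodule A B)) a).range.comap (Submodule.mkQ _) := by
      rw [Submodule.sup_smul, Submodule.ideal_span_singleton_smul]
      refine sup_le (Submodule.le_comap_mkQ _ _) ?_
      rintro _ ⟨b, _, rfl⟩
      exact ⟨Submodule.mkQ _ b, rfl⟩
    exact isNoetherian_of_surjective (Submodule.mapQ _ _ _ h_le)
      (LinearMap.range_eq_top.2 (.of_comp (g := Submodule.mkQ _)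
        ((Submodule.mkQ_surjective _).comp (Submodule.mkQ_surjective _))))

theorem restrictScalars_map_algebraMap {A R : Type*} [CommRing A] [Ring R] [Algebra A R]
    (I : Ideal A) :
    (I.map (algebraMap A R)).restrictScalars A = I • (⊤ : Submodule A R) := by
  apply le_antisymm
  · intro x hx
    induction (hx : x ∈ I.map (algebraMap A R)) using Submodule.closure_induction with
    | zero => exact zero_mem _
    | add x y _ _ hx hy => exact add_mem hx hy
    | smul_mem r x hx =>
      obtain ⟨a, ha, rfl⟩ := hx
      rw [smul_eq_mul, ← Algebra.commutes, ← Algebra.smul_def]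
      exact Submodule.smul_mem_smul ha Submodule.mem_top
  · refine Submodule.smul_le.2 fun a ha r _ => ?_
    rw [Algebra.smul_def, Algebra.commutes]
    exact Ideal.mul_mem_left _ r (Ideal.mem_map_of_mem _ ha)

theorem isNoetherianRing_of_finite_of_faithfulSMul (A R : Type*) [CommRing A] [Ring R] [Algebra A R]
    [FaithfulSMul A R] [Module.Finite A R] [IsNoetherianRing R] : IsNoetherianRing A := by
  have : IsNoetherian A R := by
    refine isNoetherian_of_wellFounded_smul_top ?_
    simp_rw [← restrictScalars_map_algebraMap]
    exact InvImage.wf (fun I : Ideal A => I.map (algebraMap A R)) wellFounded_gt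
  exact isNoetherian_of_injective (Algebra.linearMap A R) (FaithfulSMul.algebraMap_injective A R)

end EakinNagata

section Opposite

variable {R : Type*} [Ring R]

theorem tsOpIdeal_unop (Q : TwoSidedIdeal Rᵐᵒᵖ) : tsOpIdeal Q.unop = TwoSidedIdeal.asIdeal Q := by
  ext x
  exact TwoSidedIdeal.mem_unop_iff.trans TwoSidedIdeal.mem_asIdeal.symm

theorem isPrimeTS_unop {Q : TwoSidedIdeal Rᵐᵒᵖ} (hQ : IsPrimeTS Q) : IsPrimeTS Q.unop := by
  refine ⟨(map_eq_top_iff TwoSidedIdeal.opOrderIso.symm).not.2 hQ.1, fun a b hab => ?_⟩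
  simp only [TwoSidedIdeal.mem_unop_iff, MulOpposite.op_mul] at hab ⊢
  exact (hQ.2 _ _ fun r => by simpa [mul_assoc] using hab r.unop).symm

end Opposite

/-- Let `R` be a noetherian ring which is a finite module over its centre, and suppose
that for every prime ideal `P` of `R` one has `Kdim R = Kdim (R/P) + j_R(R/P)` for
both the left and the right homological grade.  Then for every nonzero finitely
generated left or right `R`-module `M`, `Kdim R = Kdim M + j_R(M)`: the ring `R` is
Krull-Macaulay. -/
theorem krull_macaulay_of_prime_condition (R : Type u) [Ring R] [IsNoetherianRing R]
    [Module.Finite (Subring.center R) R]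
    (h : ∀ P : TwoSidedIdeal R, IsPrimeTS P →
      moduleKdim R R =
          moduleKdim R (R ⧸ TwoSidedIdeal.asIdeal P) +
            homGrade R (R ⧸ TwoSidedIdeal.asIdeal P) ∧
      moduleKdim R R =
          moduleKdim Rᵐᵒᵖ (Rᵐᵒᵖ ⧸ tsOpIdeal P) + homGrade Rᵐᵒᵖ (Rᵐᵒᵖ ⧸ tsOpIdeal P)) :
    (∀ (M : Type u) [AddCommGroup M] [Module R M] [Module.Finite R M], Nontrivial M →
      moduleKdim R R = moduleKdim R M + homGrade R M) ∧
    (∀ (M : Type u) [AddCommGroup M] [Module Rᵐᵒᵖ M] [Module.Finite Rᵐᵒᵖ M],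
      Nontrivial M → moduleKdim R R = moduleKdim Rᵐᵒᵖ M + homGrade Rᵐᵒᵖ M) := by
  have : IsNoetherianRing (Subring.center R) :=
    isNoetherianRing_of_finite_of_faithfulSMul (Subring.center R) R
  have : Module.Finite (Subring.center R) Rᵐᵒᵖ :=
    .equiv (MulOpposite.opLinearEquiv (Subring.center R) (M := R))
  have h_left : PrimeGradeCondition R (moduleKdim R R) := fun P hP => (h P hP).1
  have h_right : PrimeGradeCondition Rᵐᵒᵖ (moduleKdim R R) := fun Q hQ =>
    tsOpIdeal_unop Q ▸ (h Q.unop (isPrimeTS_unop hQ)).2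
  exact ⟨fun M _ _ _ _ => h_left.eq_moduleKdim_add_homGrade (Subring.center R) M,
    fun M _ _ _ _ => h_right.eq_moduleKdim_add_homGrade (Subring.center R) M⟩
end

section
/- Let R be a noetherian ring which is a finite module over its center Z(R), let P be a prime ideal of R with p = P ∩ Z(R), and let {x_1,...,x_t} be a maximal Z(R)-regular sequence on R contained in P. Then G_{Z(R)}(p,R) ≤ min(j^ℓ_R(R/P), j^r_R(R/P)), where j denotes homological grade. -/
universe u

/-- The grade `G_C(I, M)`: the supremum of the lengths of `M`-regular sequences
consisting of elements of the ideal `I`. -/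
noncomputable def cGrade {C : Type*} [CommRing C] (I : Ideal C) (M : Type*)
    [AddCommGroup M] [Module C M] : ℕ∞ :=
  sSup {n : ℕ∞ | ∃ rs : List C, n = rs.length ∧ (∀ x ∈ rs, x ∈ I) ∧
    RingTheory.Sequence.IsRegular M rs}

/-- `M` is a maximal Cohen-Macaulay `C`-module: for every maximal ideal `m` of `C`,
the `m`-grade of `M` equals the height of `m` (that is, `Kdim (C_m)`). -/
def IsMaximalCohenMacaulay (C : Type*) [CommRing C] (M : Type*)
    [AddCommGroup M] [Module C M] : Prop :=
  ∀ m : Ideal C, m.IsMaximal → cGrade m M = cHeight m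

/-!
If `x` is central, regular on `N` and kills `M`, then multiplication by `x` on `Ext^i(M, N)` is
induced both by `x` on `N` and by `x = 0` on `M`, hence vanishes. The long exact sequence of
`0 → N → N → N/xN → 0` therefore exhibits `Ext^i(M, N)` as a quotient of `Ext^{i-1}(M, N/xN)`, and
induction along an `N`-regular sequence of length `t` that kills `M` gives `Ext^i(M, N) = 0` for
all `i < t`.
-/

open CategoryTheory Abelian RingTheory.Sequence
open scoped Pointwise

universe w v

section LongExactSequence

variable {A : Type*} [Category* A] [Abelian A] [HasExt.{w} A]

lemma ext_comp_mk₀_smul_id_eq_zero {k : Type*} [Ring k] [Linear k A] {X : A} {x : k}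
    (hX : x • 𝟙 X = 0) {Y : A} {i : ℕ} (a : Ext X Y i) :
    a.comp (Ext.mk₀ (x • 𝟙 Y)) (add_zero i) = 0 :=
  calc
    a.comp (Ext.mk₀ (x • 𝟙 Y)) (add_zero i) = x • a := (Ext.smul_eq_comp_mk₀ a x).symm
    _ = (Ext.mk₀ (x • 𝟙 X)).comp a (zero_add i) := by
      rw [Ext.mk₀_smul, Ext.smul_comp, Ext.mk₀_id_comp]
    _ = 0 := by rw [hX, Ext.mk₀_zero, Ext.zero_comp]

lemma subsingleton_ext_of_comp_mk₀_eq_zero {T : ShortComplex A} (hT : T.ShortExact) (X : A)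
    {i : ℕ} (hf : ∀ a : Ext X T.X₁ i, a.comp (Ext.mk₀ T.f) (add_zero i) = 0)
    (hX₃ : ∀ j, j + 1 = i → Subsingleton (Ext X T.X₃ j)) :
    Subsingleton (Ext X T.X₁ i) := by
  refine subsingleton_of_forall_eq 0 fun a => ?_
  cases i with
  | zero =>
    have := hT.mono_f
    exact Ext.postcomp_mk₀_injective_of_mono X T.f ((hf a).trans (map_zero _).symm)
  | succ j =>
    have := hX₃ j rfl
    obtain ⟨b, rfl⟩ := Ext.covariant_sequence_exact₁ X hT a (hf a) rfl
    rw [Subsingleton.elim b 0, Ext.zero_comp]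

end LongExactSequence

section CentralScalars

variable {C S : Type*} [CommRing C] [Ring S] [Algebra C S]

section SMulTop

variable {N : Type v} [AddCommGroup N] [Module C N] [Module S N] [IsScalarTower C S N]

lemma exact_toLinearMap_mkQ_smul_top (x : C) :
    Function.Exact (DistribSMul.toLinearMap S N x) (x • (⊤ : Submodule S N)).mkQ := by
  rw [LinearMap.exact_iff, Submodule.ker_mkQ, Submodule.pointwise_smul_def, Submodule.map_top]

variable (S N) in
/-- The complex `N → N → N/xN` of `S`-modules, for `x` in a commutative ring `C` over which `S` is
an algebra. In contrast to `ModuleCat.smulShortComplex`, the ring `S` may be noncommutative, and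
the submodule `xN` is taken over `S` rather than over `C`. -/
abbrev centralSMulShortComplex (x : C) : ShortComplex (ModuleCat.{v} S) :=
  ModuleCat.shortComplexOfCompEqZero (DistribSMul.toLinearMap S N x)
    (x • (⊤ : Submodule S N)).mkQ (exact_toLinearMap_mkQ_smul_top x).linearMap_comp_eq_zero

lemma centralSMulShortComplex_shortExact {x : C} (hx : IsSMulRegular N x) :
    (centralSMulShortComplex S N x).ShortExact :=
  ModuleCat.shortComplex_shortExact _ (exact_toLinearMap_mkQ_smul_top x) hx
    (Submodule.mkQ_surjective _)

variable (S N) in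
lemma restrictScalars_smul_top (x : C) :
    (x • (⊤ : Submodule S N)).restrictScalars C = x • (⊤ : Submodule C N) :=
  SetLike.coe_injective rfl

variable (S) in
lemma isWeaklyRegular_quotSMulTop_iff (x : C) (rs : List C) :
    IsWeaklyRegular (QuotSMulTop x N) rs ↔ IsWeaklyRegular (N ⧸ x • (⊤ : Submodule S N)) rs :=
  ((Submodule.quotEquivOfEq _ _ (restrictScalars_smul_top S N x).symm).trans
    (Submodule.Quotient.restrictScalarsEquiv C _)).isWeaklyRegular_congr rs

end SMulTop

section Vanishing

-- The modules are bundled because on `ModuleCat.of S N` the scoped `C`-action through `algebraMap`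
-- need not agree definitionally with a given `Module C N`.
open scoped ModuleCat.Algebra in
lemma ext_comp_mk₀_eq_zero_of_algebraMap_smul_eq_zero [HasExt.{w} (ModuleCat.{v} S)]
    {M N : ModuleCat.{v} S} {x : C} (hM : ∀ m : M, algebraMap C S x • m = 0)
    {f : N ⟶ N} (hf : ∀ n : N, f n = algebraMap C S x • n) {i : ℕ} (a : Ext M N i) :
    a.comp (Ext.mk₀ f) (add_zero i) = 0 := by
  have hM_id : x • 𝟙 M = 0 := ModuleCat.hom_ext (LinearMap.ext hM)
  have hf_id : f = x • 𝟙 N := ModuleCat.hom_ext (LinearMap.ext hf)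
  rw [hf_id, ext_comp_mk₀_smul_id_eq_zero hM_id]

variable {M : Type v} [AddCommGroup M] [Module C M] [Module S M] [IsScalarTower C S M]
variable {N : Type v} [AddCommGroup N] [Module C N] [Module S N] [IsScalarTower C S N]
variable [HasExt.{w} (ModuleCat.{v} S)]

variable (S) in
theorem subsingleton_ext_of_isWeaklyRegular {rs : List C}
    (hM : ∀ x ∈ rs, x ∈ Module.annihilator C M) (hN : IsWeaklyRegular N rs)
    {i : ℕ} (hi : i < rs.length) :
    Subsingleton (Ext (ModuleCat.of S M) (ModuleCat.of S N) i) := by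
  induction rs generalizing N i with
  | nil => exact absurd hi (Nat.not_lt_zero i)
  | cons x rs ih =>
    obtain ⟨hx, hrs⟩ := (isWeaklyRegular_cons_iff N x rs).1 hN
    obtain ⟨hxM, hrsM⟩ := List.forall_mem_cons.1 hM
    have hxM_smul (m : M) : algebraMap C S x • m = 0 :=
      (algebraMap_smul S x m).trans (Module.mem_annihilator.1 hxM m)
    refine subsingleton_ext_of_comp_mk₀_eq_zero (centralSMulShortComplex_shortExact hx) _
      (ext_comp_mk₀_eq_zero_of_algebraMap_smul_eq_zero hxM_smul
        fun n => (algebraMap_smul S x (n : N)).symm) ?_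
    rintro j rfl
    exact ih hrsM ((isWeaklyRegular_quotSMulTop_iff S x rs).1 hrs) (Nat.lt_of_succ_lt_succ hi)

end Vanishing

section Contraction

lemma comap_algebraMap_le_annihilator_quotient (J : Ideal S) :
    J.comap (algebraMap C S) ≤ Module.annihilator C (S ⧸ J) := by
  refine fun x hx => Module.mem_annihilator.2 fun q => ?_
  obtain ⟨s, rfl⟩ := Submodule.Quotient.mk_surjective J q
  have hxs : x • s ∈ J := by
    rw [Algebra.smul_def, Algebra.commutes]
    exact J.mul_mem_left s hx
  exact (Submodule.Quotient.mk_eq_zero J).2 hxs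

lemma comap_tsOpIdeal (P : TwoSidedIdeal S) :
    (tsOpIdeal P).comap (algebraMap C Sᵐᵒᵖ) = contractTS P := by
  ext x
  exact TwoSidedIdeal.mem_asIdeal.symm

end Contraction

end CentralScalars

section Grade

variable {C : Type*} [CommRing C]

lemma cGrade_congr {M N : Type*} [AddCommGroup M] [Module C M] [AddCommGroup N] [Module C N]
    (e : M ≃ₗ[C] N) (I : Ideal C) : cGrade I M = cGrade I N := by
  simp only [cGrade, e.isRegular_congr]

variable {S : Type u} [Ring S] [Algebra C S]

theorem cGrade_le_homGrade {M : Type u} [AddCommGroup M] [Module C M] [Module S M]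
    [IsScalarTower C S M] {I : Ideal C} (hI : I ≤ Module.annihilator C M) :
    cGrade I S ≤ homGrade S M := by
  refine sSup_le ?_
  rintro _ ⟨rs, rfl, hrs, hreg⟩
  refine le_sInf ?_
  rintro _ ⟨i, rfl, hi⟩
  contrapose! hi
  let : HasDerivedCategory (ModuleCat S) := HasDerivedCategory.standard _
  let : HasExt (ModuleCat S) := hasExt_of_hasDerivedCategory _
  exact subsingleton_ext_of_isWeaklyRegular S (fun x hx => hI (hrs x hx))
    hreg.toIsWeaklyRegular (Nat.cast_lt.1 hi)

theorem cGrade_comap_le_homGrade_quotient (J : Ideal S) :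
    cGrade (J.comap (algebraMap C S)) S ≤ homGrade S (S ⧸ J) :=
  cGrade_le_homGrade (comap_algebraMap_le_annihilator_quotient J)

theorem grade_le_min_homGrade_general (P : TwoSidedIdeal S) :
    cGrade (contractTS (C := C) P) S ≤
      min (homGrade S (S ⧸ TwoSidedIdeal.asIdeal P)) (homGrade Sᵐᵒᵖ (Sᵐᵒᵖ ⧸ tsOpIdeal P)) := by
  refine le_min (cGrade_comap_le_homGrade_quotient _) ?_
  rw [cGrade_congr (MulOpposite.opLinearEquiv C), ← comap_tsOpIdeal]
  exact cGrade_comap_le_homGrade_quotient _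

end Grade

/-- Let `R` be a noetherian ring which is a finite module over its centre `Z(R)`, let
`P` be a prime ideal of `R` with `p = P ∩ Z(R)`, and let `xs` be a maximal
`Z(R)`-regular sequence on `R` contained in `P`.  Then
`G_{Z(R)}(p, R) ≤ min (j^ℓ_R(R/P), j^r_R(R/P))`. -/
theorem grade_le_min_homGrade (R : Type u) [Ring R] [IsNoetherianRing R]
    [Module.Finite (Subring.center R) R]
    (P : TwoSidedIdeal R) (hP : IsPrimeTS P)
    (xs : List (Subring.center R)) (hin : ∀ x ∈ xs, (x : R) ∈ P)
    (hreg : RingTheory.Sequence.IsRegular R xs)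
    (hmax : ∀ y : Subring.center R, (y : R) ∈ P →
      ¬ RingTheory.Sequence.IsRegular R (xs ++ [y])) :
    cGrade (contractTS (C := Subring.center R) P) R ≤
      min (homGrade R (R ⧸ TwoSidedIdeal.asIdeal P))
        (homGrade Rᵐᵒᵖ (Rᵐᵒᵖ ⧸ tsOpIdeal P)) :=
  grade_le_min_homGrade_general P
end
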